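/- arXiv:2102.00750 — 3 statements merged into one kernel-verified Lean document; each statement's English description precedes it below -/
import Mathlib

section
/- If a ∈ {1,2}, b ∈ {0,1,2}\{a}, and v ∈ h(ba0), then the word v p is square-free and contains exactly one occurrence of p̂ and exactly one occurrence of p̄̂ as factors. -/
/-- A word is *square-free* if it contains no factor of the form `u ++ u`
with `u` nonempty. -/
def SqFree {α : Type*} (w : List α) : Prop :=
  ∀ u : List α, u ≠ [] → ¬ (u ++ u) <:+: w

/-- The word `p̂ = 1202120121021201021`. -/
def phat : List (Fin 3) := [1,2,0,2,1,2,0,1,2,1,0,2,1,2,0,1,0,2,1]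

/-- The palindrome `p = mirror(p̂) ++ 0 ++ p̂`. -/
def pal : List (Fin 3) := phat.reverse ++ 0 :: phat

/-- The number of occurrences of a (nonempty) word `u` as a factor of `v`. -/
def occCount (u v : List (Fin 3)) : ℕ :=
  (List.range v.length).countP (fun i => (v.drop i).take u.length == u)

/-- A word `v` is *nice* if `p v p` is square-free and contains exactly two
occurrences of `p̂` and exactly two occurrences of its mirror image. -/
def IsNice (v : List (Fin 3)) : Prop :=
  SqFree (pal ++ v ++ pal) ∧ occCount phat (pal ++ v ++ pal) = 2 ∧
    occCount phat.reverse (pal ++ v ++ pal) = 2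

/-- `lword n` is the lexicographically least nice word of length `n`
(the empty word if no nice word of length `n` exists). -/
noncomputable def lword (n : ℕ) : List (Fin 3) := by
  classical
  exact if h : {w : List (Fin 3) | IsNice w ∧ w.length = n}.Nonempty then
    Set.IsWF.min
      (Set.Finite.isWF
        ((List.finite_length_eq (Fin 3) n).subset (fun _ hw => hw.2))) h
  else []

/-- A set of words is *mirror-free* if it does not contain both a word and its
(distinct) mirror image. -/
def MirrorFree (S : Set (List (Fin 3))) : Prop :=
  ∀ w ∈ S, w ≠ w.reverse → w.reverse ∉ S

/-- `S` is an `n`-good set: a mirror-free set of nice words of length `n` such that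
for all `i ∈ {2n+100, …, 7n}` and all distinct `u v ∈ S`, the words
`p u p v p lᵢ`, `p ū p v p lᵢ`, `p u p v̄ p l̄ᵢ` and `p ū p v̄ p l̄ᵢ` are square-free. -/
def GoodSet (n : ℕ) (S : Set (List (Fin 3))) : Prop :=
  (∀ w ∈ S, IsNice w ∧ w.length = n) ∧ MirrorFree S ∧
    ∀ i : ℕ, 2 * n + 100 ≤ i → i ≤ 7 * n → ∀ u ∈ S, ∀ v ∈ S, u ≠ v →
      SqFree (pal ++ u ++ pal ++ v ++ pal ++ lword i) ∧
      SqFree (pal ++ u.reverse ++ pal ++ v ++ pal ++ lword i) ∧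
      SqFree (pal ++ u ++ pal ++ v.reverse ++ pal ++ (lword i).reverse) ∧
      SqFree (pal ++ u.reverse ++ pal ++ v.reverse ++ pal ++ (lword i).reverse)

/-- `mirrorIf r w` is the mirror image of `w` if `r = true`, and `w` itself otherwise. -/
def mirrorIf (r : Bool) (w : List (Fin 3)) : List (Fin 3) :=
  if r then w.reverse else w

/-- The nondeterministic substitution `h`. -/
def himg : Fin 3 → Set (List (Fin 3)) :=
  ![{[0,1,2,1,0,2,1,2,0,2,1,0,2,0,1,0,2,1,2,0,1,2,1,0],
     [0,1,2,1,0,2,1,2,0,2,1,0,2,0,1,2,0,2,1,2,0,1,2,1,0]},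
    {[1,2,0,2,1,0,2,0,1,0,2,1,0,1,2,1,0,2,0,1,2,0,2,1],
     [1,2,0,2,1,0,2,0,1,0,2,1,0,1,2,0,1,0,2,0,1,2,0,2,1]},
    {[2,0,1,0,2,1,0,1,2,1,0,2,1,2,0,2,1,0,1,2,0,1,0,2],
     [2,0,1,0,2,1,0,1,2,1,0,2,1,2,0,1,2,1,0,1,2,0,1,0,2]}]

/-- `v` is an image of `w` under the substitution `h`: `v` is obtained by replacing
each letter `c` of `w` by some word of `himg c`. -/
def IsImage (w v : List (Fin 3)) : Prop :=
  ∃ vs : List (List (Fin 3)), List.Forall₂ (fun c u => u ∈ himg c) w vs ∧ v = vs.flatten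

/-- first `k` letters of both words exist and agree -/
def eqPre : ℕ → List (Fin 3) → List (Fin 3) → Bool
  | 0, _, _ => true
  | _+1, [], _ => false
  | _+1, _::_, [] => false
  | k+1, x::s, y::t => Nat.beq x.val y.val && eqPre k s t

def sqLoop (s : List (Fin 3)) : List (Fin 3) → ℕ → Bool
  | [], _ => false
  | _::t, p => eqPre (p+1) s t || sqLoop s t (p+1)

def sqfB : List (Fin 3) → Bool
  | [] => true
  | x::s => !(sqLoop (x::s) (x::s) 0) && sqfB s

theorem eqPre_append (u s t : List (Fin 3)) : eqPre u.length (u ++ s) (u ++ t) = true := by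
  induction u with
  | nil => simp [eqPre]
  | cons x u ih => simp [eqPre, ih]

theorem sqLoop_of (s : List (Fin 3)) (a t : List (Fin 3)) (p : ℕ) (ha : a ≠ [])
    (h : eqPre (p + a.length) s t = true) : sqLoop s (a ++ t) p = true := by
  induction a generalizing p with
  | nil => exact absurd rfl ha
  | cons x a ih =>
    by_cases hn : a = []
    · subst hn
      simp at h
      simp [sqLoop, h]
    · have := ih (p+1) hn (by rw [← h]; congr 1; simp; omega)
      simp [sqLoop, this]

theorem sqfB_suffix (a s : List (Fin 3)) (h : sqfB (a ++ s) = true) : sqfB s = true := by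
  induction a with
  | nil => simpa using h
  | cons x a ih =>
    simp [sqfB] at h
    exact ih h.2

theorem sqFree_of (w : List (Fin 3)) (h : sqfB w = true) : SqFree w := by
  rintro u hu ⟨s, t, rfl⟩
  rw [List.append_assoc] at h
  have h1 := sqfB_suffix _ _ h
  have h2 : sqLoop (u ++ (u ++ t)) (u ++ (u ++ t)) 0 = true := by
    apply sqLoop_of _ _ _ _ hu
    rw [Nat.zero_add]
    exact eqPre_append u (u ++ t) t
  rw [List.append_assoc] at h1
  cases u with
  | nil => exact hu rfl
  | cons x u =>
    simp only [List.cons_append] at h1 h2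
    simp [sqfB, h2] at h1

def himgL : Fin 3 → List (List (Fin 3)) :=
  ![[[0,1,2,1,0,2,1,2,0,2,1,0,2,0,1,0,2,1,2,0,1,2,1,0],
     [0,1,2,1,0,2,1,2,0,2,1,0,2,0,1,2,0,2,1,2,0,1,2,1,0]],
    [[1,2,0,2,1,0,2,0,1,0,2,1,0,1,2,1,0,2,0,1,2,0,2,1],
     [1,2,0,2,1,0,2,0,1,0,2,1,0,1,2,0,1,0,2,0,1,2,0,2,1]],
    [[2,0,1,0,2,1,0,1,2,1,0,2,1,2,0,2,1,0,1,2,0,1,0,2],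
     [2,0,1,0,2,1,0,1,2,1,0,2,1,2,0,1,2,1,0,1,2,0,1,0,2]]]

theorem himgL_mem (c : Fin 3) (u : List (Fin 3)) (h : u ∈ himg c) : u ∈ himgL c := by
  fin_cases c <;> simpa [himg, himgL] using h

def okB (w : List (Fin 3)) : Bool :=
  sqfB w && (Nat.beq (occCount phat w) 1 && Nat.beq (occCount phat.reverse w) 1)

def allOk : Bool :=
  ([(1,0),(1,2),(2,0),(2,1)] : List (Fin 3 × Fin 3)).all fun q =>
    (himgL q.2).all fun x => (himgL q.1).all fun y => (himgL 0).all fun z =>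
      okB (x ++ (y ++ (z ++ pal)))

theorem allOk_true : allOk = true := by decide +kernel

theorem pal_suffix_image (a b : Fin 3) (ha : a = 1 ∨ a = 2) (hb : b ≠ a)
    (v : List (Fin 3)) (hv : IsImage [b, a, 0] v) :
    SqFree (v ++ pal) ∧ occCount phat (v ++ pal) = 1 ∧
      occCount phat.reverse (v ++ pal) = 1 := by
  obtain ⟨vs, hvs, rfl⟩ := hv
  obtain ⟨x, vs1, hx, hvs1, rfl⟩ := List.forall₂_cons_left_iff.1 hvs
  obtain ⟨y, vs2, hy, hvs2, rfl⟩ := List.forall₂_cons_left_iff.1 hvs1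
  obtain ⟨z, vs3, hz, hvs3, rfl⟩ := List.forall₂_cons_left_iff.1 hvs2
  obtain rfl := List.forall₂_nil_left_iff.1 hvs3
  have hq : ((a, b) : Fin 3 × Fin 3) ∈ ([(1,0),(1,2),(2,0),(2,1)] : List (Fin 3 × Fin 3)) := by
    clear hvs hvs1 hvs2 hvs3 hx hy hz
    revert a b; decide
  have h1 := List.all_eq_true.1 allOk_true _ hq
  have h2 := List.all_eq_true.1 h1 _ (himgL_mem _ _ hx)
  have h3 := List.all_eq_true.1 h2 _ (himgL_mem _ _ hy)
  have h4 := List.all_eq_true.1 h3 _ (himgL_mem _ _ hz)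
  have e : [x, y, z].flatten ++ pal = x ++ (y ++ (z ++ pal)) := by simp
  rw [e]
  simp only [okB, Bool.and_eq_true, Nat.beq_eq] at h4
  exact ⟨sqFree_of _ h4.1, h4.2.1, h4.2.2⟩
end

section
/- Let u and v be nice words. If the word p u p v p is not square-free, then u is a prefix of v or v is a suffix of u. In particular, if |u| = |v| and p u p v p is not square-free, then u = v. -/
theorem occ_aux (w P : List (Fin 3)) (hw : 0 < w.length) (h : occCount w P = 2) (i j k : ℕ)
    (hij : i < j) (hi : ∀ n < w.length, P[i+n]? = w[n]?) (hj : ∀ n < w.length, P[j+n]? = w[n]?)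
    (hk : ∀ n < w.length, P[k+n]? = w[n]?) : k = i ∨ k = j := by
  have key : ∀ m, (∀ n < w.length, P[m+n]? = w[n]?) →
      m ∈ (List.range P.length).filter (fun i => (P.drop i).take w.length == w) := by
    intro m hm
    rw [List.mem_filter, List.mem_range]
    constructor
    · have := hm 0 hw
      rw [List.getElem?_eq_getElem hw] at this
      have := (List.getElem?_eq_some_iff.1 this).1
      omega
    · rw [beq_iff_eq]
      apply List.ext_getElem?
      intro n
      by_cases hn : n < w.length
      · rw [List.getElem?_take_of_lt hn, List.getElem?_drop, hm n hn]
      · rw [List.getElem?_eq_none (by simp; omega), List.getElem?_eq_none (by omega)]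
  by_contra hc
  push Not at hc
  unfold occCount at h
  rw [List.countP_eq_length_filter] at h
  have hsub : [i, j, k] ⊆ (List.range P.length).filter (fun i => (P.drop i).take w.length == w) := by
    intro m hm
    simp only [List.mem_cons, List.not_mem_nil, or_false] at hm
    rcases hm with rfl | rfl | rfl
    · exact key _ hi
    · exact key _ hj
    · exact key _ hk
  have hnd : [i, j, k].Nodup := by
    simp
    omega
  have := (List.subperm_of_subset hnd hsub).length_le
  simp only [List.length_cons, List.length_nil] at this
  omega

theorem pal_len : pal.length = 39 := by decide

theorem pal_right : ∀ n < 19, pal[20+n]? = phat[n]? := by decide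

theorem pal_left : ∀ n < 19, pal[n]? = phat.reverse[n]? := by decide

theorem get_l (A B C : List (Fin 3)) (i : ℕ) (h : i < A.length) : (A ++ B ++ C)[i]? = A[i]? := by
  rw [List.append_assoc, List.getElem?_append_left h]

theorem get_r (A B C : List (Fin 3)) (i j : ℕ) (h : i = A.length + B.length + j) :
    (A ++ B ++ C)[i]? = C[j]? := by
  subst h
  rw [List.getElem?_append_right (by simp), List.length_append, Nat.add_sub_cancel_left]

theorem get_m (A : List (Fin 3)) (i : ℕ) : (pal ++ A)[39 + i]? = A[i]? := by
  rw [List.getElem?_append_right (by rw [pal_len]; omega), pal_len, Nat.add_sub_cancel_left]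

theorem main_pre (u v : List (Fin 3)) (hu : IsNice u) (hv : IsNice v)
    (h : ¬ SqFree (pal ++ u ++ pal ++ v ++ pal)) : u <+: v ∨ v <:+ u := by
  obtain ⟨hu1, hu2, hu3⟩ := hu
  obtain ⟨hv1, hv2, hv3⟩ := hv
  unfold SqFree at h
  push Not at h
  obtain ⟨x, hx, s, t, hst⟩ := h
  have hl := pal_len
  have hq : 0 < x.length := List.length_pos_iff.2 hx
  have hWP : pal ++ u ++ pal ++ v ++ pal = (pal ++ u ++ pal) ++ (v ++ pal) := by simp
  have hWQ : pal ++ u ++ pal ++ v ++ pal = (pal ++ u) ++ (pal ++ v ++ pal) := by simp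
  have hlen := congrArg List.length hst
  simp only [List.length_append, hl] at hlen
  have b1 : 78 + u.length < s.length + 2 * x.length := by
    by_contra hc
    apply hu1 x hx
    have h1 : s ++ (x ++ x) <+: pal ++ u ++ pal := by
      apply List.prefix_of_prefix_length_le (l₃ := pal ++ u ++ pal ++ v ++ pal)
      · exact ⟨t, hst⟩
      · exact ⟨v ++ pal, hWP.symm⟩
      · simp only [List.length_append, hl]; omega
    exact (List.suffix_append s (x ++ x)).isInfix.trans h1.isInfix
  have b2 : s.length < 39 + u.length := by
    by_contra hc
    apply hv1 x hx
    have h1 : (x ++ x) ++ t <:+ pal ++ v ++ pal := by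
      apply List.suffix_of_suffix_length_le (l₃ := pal ++ u ++ pal ++ v ++ pal)
      · exact ⟨s, by rw [← hst]; simp⟩
      · exact ⟨pal ++ u, hWQ.symm⟩
      · simp only [List.length_append, hl]; omega
    exact (List.prefix_append (x ++ x) t).isInfix.trans h1.isInfix
  have per : ∀ i, s.length ≤ i → i < s.length + x.length →
      (pal ++ u ++ pal ++ v ++ pal)[i]? = (pal ++ u ++ pal ++ v ++ pal)[i + x.length]? := by
    intro i h1 h2
    obtain ⟨j, rfl⟩ := Nat.exists_eq_add_of_le h1
    have e1 : s ++ (x ++ x) ++ t = s ++ (x ++ (x ++ t)) := by simp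
    rw [← hst, e1, List.getElem?_append_right (by omega), List.getElem?_append_left (by omega),
      List.getElem?_append_right (by omega), List.getElem?_append_right (by omega),
      List.getElem?_append_left (by omega)]
    congr 1
    omega
  have gP : ∀ i < 78 + u.length,
      (pal ++ u ++ pal ++ v ++ pal)[i]? = (pal ++ u ++ pal)[i]? := by
    intro i hi
    rw [hWP, List.getElem?_append_left (by simp only [List.length_append, hl]; omega)]
  have gQ : ∀ i j, i = 39 + u.length + j →
      (pal ++ u ++ pal ++ v ++ pal)[i]? = (pal ++ v ++ pal)[j]? := by
    intro i j hi
    rw [hWQ, List.getElem?_append_right (by simp only [List.length_append, hl]; omega)]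
    congr 1
    simp only [List.length_append, hl]; omega
  by_cases hm : s.length + x.length ≤ 59 + u.length
  · left
    have hocc := occ_aux phat (pal ++ u ++ pal) (by decide) hu2 20 (59 + u.length)
      (59 + u.length - x.length) (by omega)
      (fun n (hn : n < 19) => by
        rw [get_l _ _ _ _ (by omega), pal_right n hn])
      (fun n (hn : n < 19) => by
        rw [get_r _ _ _ _ (20 + n) (by omega), pal_right n hn])
      (fun n (hn : n < 19) => by
        rw [← gP _ (by omega), per _ (by omega) (by omega), gP _ (by omega),
          get_r _ _ _ _ (20 + n) (by omega), pal_right n hn])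
    have hxa : x.length = 39 + u.length := by omega
    have hpre : u <+: v ++ pal := by
      rw [List.prefix_iff_getElem?]
      intro i hi
      have := per (39 + i) (by omega) (by omega)
      rw [gP _ (by omega), gQ _ (39 + i) (by omega), List.append_assoc, List.append_assoc, get_m, get_m,
        List.getElem?_append_left hi,
        List.getElem?_eq_getElem hi] at this
      exact this.symm
    rcases List.prefix_or_prefix_of_prefix hpre (List.prefix_append v pal) with h1 | ⟨c, rfl⟩
    · exact h1
    · by_cases hc : c = []
      · subst hc; simp
      · exfalso
        obtain ⟨r, hr⟩ := (List.prefix_append_right_inj v).1 hpre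
        apply hu1 c hc
        refine ⟨pal ++ v, r, ?_⟩
        have : pal ++ (v ++ c) ++ pal = pal ++ (v ++ c) ++ (c ++ r) := by rw [hr]
        rw [this]; simp
  · right
    have hocc := occ_aux phat.reverse (pal ++ v ++ pal) (by decide) hv3 0 (39 + v.length)
      (x.length) (by omega)
      (fun n (hn : n < 19) => by
        rw [get_l _ _ _ _ (by omega), Nat.zero_add, pal_left n hn])
      (fun n (hn : n < 19) => by
        rw [get_r _ _ _ _ n (by omega), pal_left n hn])
      (fun n (hn : n < 19) => by
        rw [← gQ (39 + u.length + n + x.length) _ (by omega), ← per _ (by omega) (by omega),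
          gP _ (by omega), get_r _ _ _ _ n (by omega), pal_left n hn])
    have hxa : x.length = 39 + v.length := by omega
    have hsuf : v <:+ pal ++ u := by
      have e : (pal ++ u).drop (39 + u.length - v.length) = v := by
        apply List.ext_getElem?
        intro i
        rw [List.getElem?_drop]
        by_cases hi : i < v.length
        · have := per (39 + u.length - v.length + i) (by omega) (by omega)
          rw [gP _ (by omega), gQ _ (39 + i) (by omega), List.append_assoc pal v pal, get_m,
            List.getElem?_append_left hi,
            List.getElem?_append_left (by simp only [List.length_append, hl]; omega)] at this
          exact this
        · rw [List.getElem?_eq_none (by simp only [List.length_append, hl]; omega),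
            List.getElem?_eq_none (by omega)]
      have := List.drop_suffix (39 + u.length - v.length) (pal ++ u)
      rwa [e] at this
    rcases List.suffix_or_suffix_of_suffix hsuf (List.suffix_append pal u) with h1 | ⟨c, rfl⟩
    · exact h1
    · by_cases hc : c = []
      · subst hc; simp
      · exfalso
        obtain ⟨r, hr⟩ := hsuf
        have hr : r ++ c = pal := by
          rw [← List.append_assoc] at hr
          exact List.append_cancel_right hr
        apply hv1 c hc
        refine ⟨r, u ++ pal, ?_⟩
        have : pal ++ (c ++ u) ++ pal = (r ++ c) ++ (c ++ u) ++ pal := by rw [hr]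
        rw [this]; simp

/-- If `u` and `v` are nice and `p u p v p` is not square-free, then `u` is a prefix
of `v` or `v` is a suffix of `u`; in particular if `|u| = |v|` then `u = v`. -/
theorem nice_square_prefix_suffix (u v : List (Fin 3)) (hu : IsNice u) (hv : IsNice v)
    (h : ¬ SqFree (pal ++ u ++ pal ++ v ++ pal)) :
    (u <+: v ∨ v <:+ u) ∧ (u.length = v.length → u = v) := by
  have h1 := main_pre u v hu hv h
  refine ⟨h1, fun hl => ?_⟩
  rcases h1 with h1 | h1
  · exact h1.eq_of_length hl
  · exact (h1.eq_of_length hl.symm).symm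
end

section
/- For every integer n > 8750, there exists an n-good set S of size at least |S| ≥ 1.01^n / (16(60n² + 1)). -/
/-! ### Position-based reformulation -/

def At {α : Type*} (X W : List α) (j : ℕ) : Prop := ∀ i, i < X.length → W[j+i]? = X[i]?

def Sq {α : Type*} (W : List α) (s q : ℕ) : Prop :=
  0 < q ∧ s + 2 * q ≤ W.length ∧ ∀ j, s ≤ j → j < s + q → W[j]? = W[j+q]?

theorem sqFree_iff {α : Type*} (W : List α) : SqFree W ↔ ∀ s q, ¬ Sq W s q := by
  constructor
  · rintro h s q ⟨hq, hl, he⟩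
    refine h ((W.drop s).take q) ?_ ?_
    · intro h0
      have := congrArg List.length h0
      simp at this
      omega
    · have e : (W.drop s).take q = (W.drop (s+q)).take q := by
        apply List.ext_getElem?
        intro i
        by_cases hi : i < q
        · rw [List.getElem?_take_of_lt hi, List.getElem?_take_of_lt hi, List.getElem?_drop,
            List.getElem?_drop, he (s+i) (by omega) (by omega)]
          congr 1; omega
        · rw [List.getElem?_eq_none (by simp; omega), List.getElem?_eq_none (by simp; omega)]
      refine ⟨W.take s, W.drop (s+2*q), ?_⟩
      nth_rewrite 2 [e]
      have h1 : (W.drop s).drop q = W.drop (s+q) := by rw [List.drop_drop]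
      have h2 : (W.drop (s+q)).drop q = W.drop (s+2*q) := by
        rw [List.drop_drop]; congr 1; omega
      calc _ = W.take s ++ ((W.drop s).take q ++ ((W.drop (s+q)).take q ++ W.drop (s+2*q))) := by simp
        _ = W.take s ++ ((W.drop s).take q ++ W.drop (s+q)) := by
          rw [← h2, List.take_append_drop]
        _ = W := by rw [← h1, List.take_append_drop, List.take_append_drop]
  · rintro h u hu ⟨a, b, rfl⟩
    have hp : 0 < u.length := List.length_pos_iff.mpr hu
    refine h a.length u.length ⟨hp, by simp; omega, ?_⟩
    intro j h1 h2
    obtain ⟨i, rfl⟩ := Nat.exists_eq_add_of_le h1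
    have hi : i < u.length := by omega
    have e1 : (a ++ (u ++ (u ++ b)))[a.length + i]? = u[i]? := by
      rw [List.getElem?_append_right (by omega), show a.length + i - a.length = i by omega,
        List.getElem?_append_left hi]
    have e2 : (a ++ (u ++ (u ++ b)))[a.length + i + u.length]? = u[i]? := by
      rw [List.getElem?_append_right (by omega),
        show a.length + i + u.length - a.length = u.length + i by omega,
        List.getElem?_append_right (by omega), show u.length + i - u.length = i by omega,
        List.getElem?_append_left hi]
    rw [List.append_assoc, List.append_assoc, e1, e2]

theorem Sq.of_at {α : Type*} {W X : List α} {s q j : ℕ} (h : Sq W s q) (hX : At X W j)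
    (h1 : j ≤ s) (h2 : s + 2 * q ≤ j + X.length) : Sq X (s - j) q := by
  obtain ⟨hq, hl, he⟩ := h
  refine ⟨hq, by omega, ?_⟩
  intro t ht ht'
  rw [← hX t (by omega), ← hX (t+q) (by omega), he (j+t) (by omega) (by omega)]
  congr 1; omega

theorem main_sq {α ι : Type*} (W : List α) (K : ℕ) (B : ℕ → List α) (c : ℕ → ℕ) (lab : ℕ → ι)
    (c0 : c 0 = 0) (cs : ∀ k, c (k+1) = c k + (B k).length) (cK : W.length = c K)
    (hB : ∀ k < K, At (B k) W (c k))
    (hpos : ∀ k < K, 0 < (B k).length)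
    (h1 : ∀ i < K, ∀ j < K, ∀ o, o + (B i).length ≤ (B j).length → At (B i) (B j) o → B i = B j)
    (h2 : ∀ i < K, ∀ j, j + 1 < K → ∀ o < (B j).length,
      o + (B i).length ≤ (B j).length + (B (j+1)).length → At (B i) (B j ++ B (j+1)) o → o = 0)
    (hK : 3 ≤ K)
    (h3 : ∀ k, k + 2 < K → SqFree (B k ++ B (k+1) ++ B (k+2)))
    (h4 : ∀ j, 0 < j → j + 1 < K → 24 ≤ (B j).length)
    (h4p : ∀ j, 0 < j → j + 1 < K → ∀ i, 0 < i → i < K → lab i ≠ lab j →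
      ∃ d < 12, d < (B i).length ∧ (B i)[d]? ≠ (B j)[d]?)
    (h4s : ∀ j, 0 < j → j + 1 < K → ∀ i, i + 1 < K → lab i ≠ lab j →
      ∃ d < 12, d < (B i).length ∧ (B i)[(B i).length - 1 - d]? ≠ (B j)[(B j).length - 1 - d]?)
    (h5 : ∀ i < K, ∀ j < K, B i = B j → lab i = lab j)
    (h6 : ∀ s q, 0 < q → s + 2 * q ≤ K → ∃ j, s ≤ j ∧ j < s + q ∧ lab j ≠ lab (j+q)) :
    SqFree W := by
  have cmono : Monotone c := monotone_nat_of_le_succ (fun k => by rw [cs]; omega)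
  have cstrict : ∀ i j, i < j → j ≤ K → c i < c j := by
    intro i j hij hj
    have := cs i
    have := hpos i (by omega)
    have : c (i+1) ≤ c j := cmono hij
    omega
  have cinj : ∀ i j, i ≤ K → j ≤ K → c i = c j → i = j := by
    intro i j hi hj h
    rcases lt_trichotomy i j with h' | h' | h'
    · have := cstrict i j h' hj; omega
    · exact h'
    · have := cstrict j i h' hi; omega
  have clt : ∀ i j, c i < c j → i < j := by
    intro i j h
    by_contra h'
    have : c j ≤ c i := cmono (by omega)
    omega
  have locate : ∀ j, j < W.length → ∃ k < K, c k ≤ j ∧ j < c (k+1) := by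
    intro j hj
    have hex : ∃ k, j < c k := ⟨K, by omega⟩
    classical
    have hs := Nat.find_spec hex
    have hm := fun m => Nat.find_min (m := m) hex
    obtain ⟨k, hk⟩ : ∃ k, Nat.find hex = k := ⟨_, rfl⟩
    rw [hk] at hs hm
    have hk0 : k ≠ 0 := by rintro rfl; omega
    obtain ⟨k, rfl⟩ := Nat.exists_eq_succ_of_ne_zero hk0
    have := hm k (by omega)
    exact ⟨k, clt _ _ (by omega), by omega, hs⟩
  have sync : ∀ i < K, ∀ j, j + (B i).length ≤ W.length → At (B i) W j →
      ∃ k < K, c k = j ∧ B k = B i := by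
    intro i hi j hj hat
    have hp := hpos i hi
    obtain ⟨k, hk, hk1, hk2⟩ := locate j (by omega)
    have ck := cs k
    by_cases hc1 : j + (B i).length ≤ c (k+1)
    · have : B i = B k := by
        refine h1 i hi k hk (j - c k) (by omega) ?_
        intro t ht
        rw [← hat t ht, ← hB k hk _ (by omega)]
        congr 1; omega
      refine ⟨k, hk, ?_, this.symm⟩
      rw [this] at hc1
      omega
    have hk' : k + 1 < K := clt _ _ (by omega)
    have ck1 : c (k+2) = c (k+1) + (B (k+1)).length := cs (k+1)
    by_cases hc2 : j + (B i).length ≤ c (k+2)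
    · have o0 : j - c k = 0 := by
        refine h2 i hi k hk' (j - c k) (by omega) (by omega) ?_
        intro t ht
        rw [← hat t ht]
        by_cases htt : j - c k + t < (B k).length
        · rw [List.getElem?_append_left htt, ← hB k hk _ htt]
          congr 1; omega
        · rw [List.getElem?_append_right (by omega), ← hB (k+1) hk' _ (by omega)]
          congr 1; omega
      refine ⟨k, hk, by omega, ?_⟩
      refine h1 k hk i hi 0 (by omega) ?_
      intro t ht
      rw [← hB k hk t ht, ← hat (0+t) (by omega)]
      congr 1; omega
    · exfalso
      have : B (k+1) = B i := by
        refine h1 (k+1) hk' i hi (c (k+1) - j) (by omega) ?_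
        intro t ht
        rw [← hB (k+1) hk' t ht, ← hat _ (by omega)]
        congr 1; omega
      have := congrArg List.length this
      omega
  rw [sqFree_iff]
  rintro s q hsq
  have hsq' := hsq
  obtain ⟨hq, hl, he⟩ := hsq
  have claim1 : ∀ k < K, s ≤ c k → c (k+1) ≤ s + q → ∃ k' < K, c k' = c k + q ∧ B k' = B k := by
    intro k hk a1 a2
    have := cs k
    refine sync k hk _ (by omega) ?_
    intro t ht
    rw [← hB k hk t ht, he (c k + t) (by omega) (by omega)]
    congr 1; omega
  have claim2 : ∀ k < K, s + q ≤ c k → c (k+1) ≤ s + 2 * q →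
      ∃ k' < K, c k' + q = c k ∧ B k' = B k := by
    intro k hk a1 a2
    have := cs k
    obtain ⟨k', x, y, z⟩ := sync k hk (c k - q) (by omega) (by
      intro t ht
      rw [← hB k hk t ht, he (c k - q + t) (by omega) (by omega)]
      congr 1; omega)
    exact ⟨k', x, by omega, z⟩
  have least : ∀ x, x ≤ W.length → ∃ a ≤ K, x ≤ c a ∧ ∀ k, k < a → c k < x := by
    intro x hx
    classical
    have hex : ∃ k, x ≤ c k := ⟨K, by omega⟩
    refine ⟨Nat.find hex, Nat.find_min' hex (by omega), Nat.find_spec hex, ?_⟩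
    intro k hk
    have := Nat.find_min hex hk
    omega
  obtain ⟨a, haK, ha, ham⟩ := least s (by omega)
  obtain ⟨b, hbK, hb, hbm⟩ := least (s+q) (by omega)
  have hab : a ≤ b := by
    by_contra h
    have := ham b (by omega)
    omega
  by_cases hI : a < K ∧ c (a+1) ≤ s + q
  · obtain ⟨haK', hI⟩ := hI
    obtain ⟨a', ha'K, hca', hBa'⟩ := claim1 a haK' ha hI
    have ca1 := cs a
    have ca'1 := cs a'
    have hpa := hpos a haK'
    rw [hBa'] at ca'1
    have hba' : b = a' := by
      have hle : b ≤ a' := by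
        by_contra h
        have := hbm a' (by omega)
        omega
      rcases Nat.lt_or_ge b a' with hlt | hge
      · exfalso
        have e1 : c (b+1) ≤ c a' := cmono hlt
        have e2 := cstrict b a' hlt (by omega)
        obtain ⟨b', hb'K, hb', -⟩ := claim2 b (by omega) hb (by omega)
        have := ham b' (clt _ _ (by omega))
        omega
      · omega
    subst hba'
    have key : ∀ t, a + t ≤ K → c (a+t) ≤ s + q → b + t ≤ K ∧ c (b+t) = c (a+t) + q ∧
        ∀ i < t, B (a+i) = B (b+i) := by
      intro t
      induction t with
      | zero => intro _ _; exact ⟨by omega, by simpa using hca', by intro i hi; omega⟩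
      | succ t ih =>
        intro ht hct
        have cat := cs (a+t)
        rw [show a + t + 1 = a + (t+1) by omega] at cat
        obtain ⟨i1, i2, i3⟩ := ih (by omega) (by omega)
        have hsa : s ≤ c (a+t) := le_trans ha (cmono (by omega))
        obtain ⟨k', hk'K, hk', hBk'⟩ := claim1 (a+t) (by omega) hsa
          (by rw [show a + t + 1 = a + (t+1) by omega]; exact hct)
        have : k' = b + t := cinj _ _ (by omega) i1 (by omega)
        subst this
        have cbt := cs (b+t)
        rw [hBk'] at cbt
        refine ⟨by omega, by rw [show b + (t+1) = b + t + 1 by omega]; omega, ?_⟩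
        intro i hi
        rcases Nat.lt_or_ge i t with h | h
        · exact i3 i h
        · have : i = t := by omega
          subst this; exact hBk'.symm
    have hab' : a < b := clt _ _ (by omega)
    by_cases hcb : c b = s + q
    · -- x x
      obtain ⟨k1, k2, k3⟩ := key (b - a) (by omega)
        (by rw [show a + (b-a) = b by omega]; omega)
      obtain ⟨j, j1, j2, j3⟩ := h6 a (b-a) (by omega) (by omega)
      apply j3
      refine h5 _ (by omega) _ (by omega) ?_
      have := k3 (j-a) (by omega)
      rw [show a + (j-a) = j by omega, show b + (j-a) = j + (b-a) by omega] at this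
      exact this
    · obtain ⟨r, hr⟩ : ∃ r, b = a + r + 1 := ⟨b - a - 1, by omega⟩
      have hcr := hbm (a+r) (by omega)
      obtain ⟨k1, k2, k3⟩ := key r (by omega) (by omega)
      have ha1 : 0 < a := by
        rcases Nat.eq_zero_or_pos a with h | h
        · subst h; omega
        · exact h
      have hbr : b + r < K := clt _ _ (by omega)
      have cA := cs (a-1)
      rw [show a - 1 + 1 = a by omega] at cA
      have cAs := ham (a-1) (by omega)
      have cM := cs (a+r)
      rw [← hr] at cM
      have cC := cs (b+r)
      by_cases hAB : lab (a-1) = lab (a+r)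
      · obtain ⟨j, j1, j2, j3⟩ := h6 (a-1) (r+1) (by omega) (by omega)
        apply j3
        rcases Nat.eq_or_lt_of_le j1 with h | h
        · rw [← h, hAB]; congr 1; omega
        · refine h5 _ (by omega) _ (by omega) ?_
          have := k3 (j-a) (by omega)
          rw [show a + (j-a) = j by omega, show b + (j-a) = j + (r+1) by omega] at this
          exact this
      by_cases hBC : lab (b+r) = lab (a+r)
      · obtain ⟨j, j1, j2, j3⟩ := h6 a (r+1) (by omega) (by omega)
        apply j3
        by_cases h : j = a + r
        · subst h; rw [← hBC]; congr 1; omega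
        · refine h5 _ (by omega) _ (by omega) ?_
          have := k3 (j-a) (by omega)
          rw [show a + (j-a) = j by omega, show b + (j-a) = j + (r+1) by omega] at this
          exact this
      have hlen := h4 (a+r) (by omega) (by omega)
      obtain ⟨d, d1, d2, d3⟩ := h4p (a+r) (by omega) (by omega) (b+r) (by omega) hbr hBC
      obtain ⟨e, e1, e2, e3⟩ := h4s (a+r) (by omega) (by omega) (a-1) (by omega) hAB
      have hd : s + q ≤ c (a+r) + d := by
        by_contra h
        apply d3
        rw [← hB (b+r) hbr d d2, ← hB (a+r) (by omega) d (by omega),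
          he (c (a+r) + d) (by have : c a ≤ c (a+r) := cmono (by omega)
                               omega) (by omega)]
        congr 1; omega
      have hee : c b < s + q + e + 1 := by
        by_contra h
        apply e3
        rw [← hB (a-1) (by omega) _ (by omega), ← hB (a+r) (by omega) _ (by omega),
          he _ (by omega) (by omega)]
        congr 1; omega
      omega
  · -- few blocks
    have hb1 : b ≤ a + 1 := by
      by_contra h
      have := hbm (a+1) (by omega)
      exact hI ⟨by omega, by omega⟩
    have hend : s + 2 * q ≤ c (a+2) := by
      by_contra h
      have hb2 : c (b+1) ≤ c (a+2) := cmono (by omega)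
      have hbK' : b < K := by
        have := clt (a+2) K (by omega)
        omega
      obtain ⟨b', x1, x2, x3⟩ := claim2 b hbK' hb (by omega)
      have hab' : a ≤ b' := by
        by_contra h
        have := ham b' (by omega)
        omega
      apply hI
      have : c (a+1) ≤ c (b'+1) := cmono (by omega)
      have cb' := cs b'
      rw [x3] at cb'
      have cb := cs b
      exact ⟨by omega, by omega⟩
    obtain ⟨t, ht1, ht2, ht3⟩ : ∃ t, t + 2 < K ∧ c t ≤ s ∧ s + 2 * q ≤ c (t+3) := by
      by_cases hh : a + 2 ≤ K
      · rcases Nat.eq_zero_or_pos a with h | h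
        · subst h
          exact ⟨0, by omega, by omega, le_trans hend (cmono (by omega))⟩
        · have := ham (a-1) (by omega)
          exact ⟨a-1, by omega, by omega, le_trans hend (cmono (by omega))⟩
      · have := ham (K-3) (by omega)
        refine ⟨K-3, by omega, by omega, ?_⟩
        rw [show K - 3 + 3 = K by omega]; omega
    have q1 := cs t
    have q2 : c (t+2) = c (t+1) + (B (t+1)).length := cs (t+1)
    have q3 : c (t+3) = c (t+2) + (B (t+2)).length := cs (t+2)
    refine (sqFree_iff _).1 (h3 t ht1) _ _ (hsq'.of_at (j := c t) ?_ ht2 ?_)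
    · intro i hi
      simp only [List.length_append] at hi
      by_cases hi1 : i < (B t).length
      · rw [List.append_assoc, List.getElem?_append_left hi1, hB t (by omega) i hi1]
      by_cases hi2 : i < (B t).length + (B (t+1)).length
      · rw [List.append_assoc, List.getElem?_append_right (by omega),
          List.getElem?_append_left (by omega), ← hB (t+1) (by omega) _ (by omega)]
        congr 1; omega
      · rw [List.append_assoc, List.getElem?_append_right (by omega),
          List.getElem?_append_right (by omega), ← hB (t+2) (by omega) _ (by omega)]
        congr 1; omega
    · simp only [List.length_append]
      omega


/-! ### Concrete blocks and finite checks -/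

def hb : Fin 3 → Bool → List (Fin 3)
  | 0, false => [0,1,2,1,0,2,1,2,0,2,1,0,2,0,1,0,2,1,2,0,1,2,1,0]
  | 0, true => [0,1,2,1,0,2,1,2,0,2,1,0,2,0,1,2,0,2,1,2,0,1,2,1,0]
  | 1, false => [1,2,0,2,1,0,2,0,1,0,2,1,0,1,2,1,0,2,0,1,2,0,2,1]
  | 1, true => [1,2,0,2,1,0,2,0,1,0,2,1,0,1,2,0,1,0,2,0,1,2,0,2,1]
  | 2, false => [2,0,1,0,2,1,0,1,2,1,0,2,1,2,0,2,1,0,1,2,0,1,0,2]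
  | 2, true => [2,0,1,0,2,1,0,1,2,1,0,2,1,2,0,1,2,1,0,1,2,0,1,0,2]

def ac : Fin 3 → List (Fin 3)
  | 0 => [0,1,2,0,1,0,2]
  | 1 => [0,1,2,0,1,0,2]
  | 2 => [0,1,2,0,2,1,0]

inductive Bk where
  | L (c : Fin 3) : Bk
  | I (c : Fin 3) (b : Bool) : Bk
  | R (c : Fin 3) : Bk

def Bk.word : Bk → List (Fin 3)
  | .L c => pal ++ ac c
  | .I c b => hb c b
  | .R c => (ac c).reverse ++ pal

def Bk.lab : Bk → ℕ
  | .L _ => 3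
  | .I c _ => c.val
  | .R _ => 4

def Bk.adj : Bk → Bk → Bool
  | .L c, .I d _ => c.val == d.val
  | .I c _, .I d _ => !(c.val == d.val)
  | .I c _, .R d => c.val == d.val
  | _, _ => false

def inn : List Bk := [.I 0 true, .I 0 false, .I 1 true, .I 1 false, .I 2 true, .I 2 false]
def lef : List Bk := [.L 0, .L 1, .L 2]
def rig : List Bk := [.R 0, .R 1, .R 2]
def allBk : List Bk := inn ++ (lef ++ rig)

theorem mem_inn (c : Fin 3) (b : Bool) : Bk.I c b ∈ inn := by
  fin_cases c <;> cases b <;> simp [inn]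
theorem mem_lef (c : Fin 3) : Bk.L c ∈ lef := by
  fin_cases c <;> simp [lef]
theorem mem_rig (c : Fin 3) : Bk.R c ∈ rig := by
  fin_cases c <;> simp [rig]
theorem mem_all (x : Bk) : x ∈ allBk := by
  unfold allBk
  cases x with
  | L c => have := mem_lef c; simp [this]
  | I c b => have := mem_inn c b; simp [this]
  | R c => have := mem_rig c; simp [this]

/-- `X` is a prefix of `W`. -/
def preB (X : List (Fin 3)) : List (Fin 3) → Bool :=
  List.rec (fun _ => true) (fun x _ ih W => List.rec false (fun y W' _ =>
    Bool.rec false (ih W') (Nat.beq x.val y.val)) W) X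

theorem preB_cons (x y : Fin 3) (X W : List (Fin 3)) :
    preB (x :: X) (y :: W) = (Nat.beq x.val y.val && preB X W) := by
  change (Bool.rec false (preB X W) (Nat.beq x.val y.val) : Bool) = _
  cases Nat.beq x.val y.val <;> rfl

theorem preB_of (X : List (Fin 3)) : ∀ (W : List (Fin 3)), At X W 0 → preB X W = true := by
  induction X with
  | nil => intro W _; cases W <;> rfl
  | cons x X ih =>
    intro W h
    have h0 := h 0 (by simp)
    cases W with
    | nil => simp at h0
    | cons y W =>
      simp at h0
      subst h0
      have : preB X W = true := by
        apply ih
        intro i hi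
        have := h (i+1) (by simpa using hi)
        simpa [← Nat.add_assoc] using this
      simp [preB_cons, this]

def noOccN (n : ℕ) (X : List (Fin 3)) : List (Fin 3) → Bool :=
  Nat.rec (fun _ => true) (fun _ ih W => List.rec true (fun y W' _ =>
    Bool.rec (ih W') false (preB X (y :: W'))) W) n

theorem noOccN_cons (n : ℕ) (y : Fin 3) (X W : List (Fin 3)) :
    noOccN (n+1) X (y :: W) = (!(preB X (y :: W)) && noOccN n X W) := by
  change (Bool.rec (noOccN n X W) false (preB X (y :: W)) : Bool) = _
  cases preB X (y :: W) <;> rfl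

theorem noOccN_sound (X : List (Fin 3)) (hX : 0 < X.length) : ∀ (n : ℕ) (W : List (Fin 3)),
    noOccN n X W = true → ∀ o < n, ¬ At X W o := by
  intro n
  induction n with
  | zero => intro W _ o ho; omega
  | succ n ih =>
    intro W h o ho hat
    cases W with
    | nil =>
      have := hat 0 hX
      simp at this
      subst this
      simp at hX
    | cons y W =>
      simp only [noOccN_cons, Bool.and_eq_true, Bool.not_eq_true'] at h
      cases o with
      | zero =>
        have := preB_of X _ hat
        rw [this] at h
        simp at h
      | succ o =>
        refine ih W h.2 o (by omega) ?_
        intro i hi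
        have := hat i hi
        rw [show o + 1 + i = (o + i) + 1 by omega] at this
        simpa using this

/-- first `q` letters agree -/
def cmpB (q : ℕ) : List (Fin 3) → List (Fin 3) → Bool :=
  Nat.rec (fun _ _ => true) (fun _ ih X Y =>
    List.rec false (fun x X' _ => List.rec false (fun y Y' _ =>
      Bool.rec false (ih X' Y') (Nat.beq x.val y.val)) Y) X) q

theorem cmpB_cons (q : ℕ) (x y : Fin 3) (X Y : List (Fin 3)) :
    cmpB (q+1) (x :: X) (y :: Y) = (Nat.beq x.val y.val && cmpB q X Y) := by
  change (Bool.rec false (cmpB q X Y) (Nat.beq x.val y.val) : Bool) = _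
  cases Nat.beq x.val y.val <;> rfl

theorem cmpB_of : ∀ (q : ℕ) (X Y : List (Fin 3)), q ≤ X.length → q ≤ Y.length →
    (∀ i < q, X[i]? = Y[i]?) → cmpB q X Y = true := by
  intro q
  induction q with
  | zero => intros; rfl
  | succ q ih =>
    intro X Y hX hY h
    cases X with
    | nil => simp at hX
    | cons x X =>
      cases Y with
      | nil => simp at hY
      | cons y Y =>
        have h0 := h 0 (by omega)
        simp at h0
        subst h0
        have := ih X Y (by simpa using hX) (by simpa using hY) (by
          intro i hi
          have := h (i+1) (by omega)
          simpa using this)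
        simp [cmpB_cons, this]

def noSqP (f : ℕ) (w : List (Fin 3)) : ℕ → List (Fin 3) → Bool :=
  Nat.rec (fun _ _ => true) (fun _ ih q Y =>
    List.rec true (fun y ys _ => Bool.rec (ih (Nat.succ q) ys) false (cmpB q w (y :: ys))) Y) f

theorem noSqP_cons (f q : ℕ) (y : Fin 3) (w ys : List (Fin 3)) :
    noSqP (f+1) w q (y :: ys) = (!(cmpB q w (y :: ys)) && noSqP f w (q+1) ys) := by
  change (Bool.rec (noSqP f w (q+1) ys) false (cmpB q w (y :: ys)) : Bool) = _
  cases cmpB q w (y :: ys) <;> rfl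

theorem noSqP_sound : ∀ (f : ℕ) (w : List (Fin 3)) (q : ℕ) (ys : List (Fin 3)), 0 < q →
    ys = w.drop q → noSqP f w q ys = true → ∀ r, q ≤ r → r < q + f → ¬ Sq w 0 r := by
  intro f
  induction f with
  | zero => intros; omega
  | succ f ih =>
    intro w q ys hq hys h r hr1 hr2 hsq
    obtain ⟨h1, h2, h3⟩ := hsq
    have hl := congrArg List.length hys
    simp at hl
    cases ys with
    | nil => simp at hl; omega
    | cons y ys =>
      simp only [noSqP_cons, Bool.and_eq_true, Bool.not_eq_true'] at h
      rcases Nat.eq_or_lt_of_le hr1 with e | e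
      · subst e
        have := cmpB_of q w (y :: ys) (by omega) (by omega) (by
          intro i hi
          rw [hys, List.getElem?_drop, h3 i (by omega) (by omega)]
          congr 1; omega)
        rw [this] at h
        simp at h
      · refine ih w (q+1) ys (by omega) ?_ h.2 r e (by omega) ⟨h1, h2, h3⟩
        rw [show q + 1 = 1 + q by omega, Nat.add_comm, ← List.drop_drop, ← hys]
        rfl

def sqfb (w : List (Fin 3)) : Bool :=
  List.rec true (fun x t ih => Bool.rec false ih (noSqP ((t.length + 1) / 2) (x :: t) 1 t)) w

theorem sqfb_cons (x : Fin 3) (t : List (Fin 3)) :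
    sqfb (x :: t) = (noSqP ((t.length + 1) / 2) (x :: t) 1 t && sqfb t) := by
  change (Bool.rec false (sqfb t) (noSqP ((t.length + 1) / 2) (x :: t) 1 t) : Bool) = _
  cases noSqP ((t.length + 1) / 2) (x :: t) 1 t <;> rfl

theorem sqfb_sound : ∀ w : List (Fin 3), sqfb w = true → SqFree w := by
  intro w
  rw [sqFree_iff]
  induction w with
  | nil =>
    intro _ s q h
    have := h.1; have := h.2.1
    simp at this
    omega
  | cons x t ih =>
    intro h s q hsq
    simp only [sqfb_cons, Bool.and_eq_true] at h
    cases s with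
    | zero =>
      have := hsq.2.1
      simp at this
      have := hsq.1
      exact noSqP_sound _ (x :: t) 1 t (by omega) (by simp) h.1 q (by omega) (by omega) hsq
    | succ s =>
      refine ih h.2 s q ⟨hsq.1, ?_, ?_⟩
      · have := hsq.2.1
        simp at this
        omega
      · intro j h1 h2
        have := hsq.2.2 (j+1) (by omega) (by omega)
        rw [show j + 1 + q = j + q + 1 by omega] at this
        simpa using this

def noSq3 (n : ℕ) (w : List (Fin 3)) (ly f : ℕ) : Bool :=
  Nat.rec (fun _ => true) (fun n ih w => List.rec true (fun x t _ =>
    Bool.rec false (ih t) (noSqP f (x :: t) ((n + 1 + ly) / 2 + 1)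
      ((x :: t).drop ((n + 1 + ly) / 2 + 1)))) w) n w

theorem noSq3_cons (n : ℕ) (x : Fin 3) (t : List (Fin 3)) (ly f : ℕ) :
    noSq3 (n+1) (x :: t) ly f = (noSqP f (x :: t) ((n + 1 + ly) / 2 + 1)
      ((x :: t).drop ((n + 1 + ly) / 2 + 1)) && noSq3 n t ly f) := by
  change (Bool.rec false (noSq3 n t ly f) (noSqP f (x :: t) ((n + 1 + ly) / 2 + 1)
      ((x :: t).drop ((n + 1 + ly) / 2 + 1))) : Bool) = _
  cases noSqP f (x :: t) ((n + 1 + ly) / 2 + 1) ((x :: t).drop ((n + 1 + ly) / 2 + 1)) <;> rfl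

theorem noSq3_sound : ∀ (n : ℕ) (w : List (Fin 3)) (ly f : ℕ), w.length ≤ n + ly + 2 * f →
    noSq3 n w ly f = true → ∀ s q, s < n → n + ly < s + 2 * q → ¬ Sq w s q := by
  intro n
  induction n with
  | zero => intros; omega
  | succ n ih =>
    intro w ly f hw h s q hs hq hsq
    have hl := hsq.2.1
    cases w with
    | nil => simp at hl; omega
    | cons x t =>
      simp only [noSq3_cons, Bool.and_eq_true] at h
      simp only [List.length_cons] at hw hl
      cases s with
      | zero =>
        exact noSqP_sound f (x :: t) _ _ (by omega) rfl h.1 q (by omega) (by omega) hsq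
      | succ s =>
        refine ih t ly f (by omega) h.2 s q (by omega) (by omega) ⟨hsq.1, by omega, ?_⟩
        intro j h1 h2
        have := hsq.2.2 (j+1) (by omega) (by omega)
        rw [show j + 1 + q = j + q + 1 by omega] at this
        simpa using this

theorem sqFree_triple (X Y Z : List (Fin 3)) (h1 : SqFree (X ++ Y)) (h2 : SqFree (Y ++ Z))
    (h3 : noSq3 X.length (X ++ Y ++ Z) Y.length ((Z.length + 1) / 2) = true) :
    SqFree (X ++ Y ++ Z) := by
  rw [sqFree_iff] at *
  intro s q hsq
  by_cases hs : s < X.length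
  · by_cases he : s + 2 * q ≤ X.length + Y.length
    · refine h1 _ _ (hsq.of_at (j := 0) ?_ (by omega) (by simp; omega))
      intro i hi
      rw [Nat.zero_add, List.getElem?_append_left hi]
    · exact noSq3_sound _ _ _ _ (by simp; omega) h3 s q hs (by omega) hsq
  · refine h2 _ _ (hsq.of_at (j := X.length) ?_ (by omega) ?_)
    · intro i hi
      rw [List.append_assoc, List.getElem?_append_right (by omega)]
      congr 1; omega
    · have := hsq.2.1
      simp at this ⊢
      omega

def chk1 : Bool := allBk.all fun X => allBk.all fun Y =>
  (X.word == Y.word && X.lab == Y.lab) ||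
    noOccN Y.word.length X.word Y.word

def chk2 : Bool := allBk.all fun Y => allBk.all fun Z => !(Y.adj Z) || allBk.all fun X =>
    noOccN (Y.word.length - 1) X.word (Y.word ++ Z.word).tail

def chk3 : Bool := allBk.all fun X => allBk.all fun Y => !(X.adj Y) || allBk.all fun Z =>
    !(Y.adj Z) || noSq3 X.word.length (X.word ++ Y.word ++ Z.word) Y.word.length
      ((Z.word.length + 1) / 2)

def chk3p : Bool := allBk.all fun X => allBk.all fun Y => !(X.adj Y) || sqfb (X.word ++ Y.word)

def chk4p : Bool := inn.all fun X => (inn ++ rig).all fun Y => (X.lab == Y.lab) ||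
    !(cmpB 12 X.word Y.word)
def chk4s : Bool := inn.all fun X => (inn ++ lef).all fun Y => (X.lab == Y.lab) ||
    !(cmpB 12 X.word.reverse Y.word.reverse)
def chkLen : Bool := allBk.all fun X => Nat.ble 24 X.word.length

def chkO1 : Bool := inn.all fun X => (inn ++ rig).all fun Y => !(X.adj Y) ||
  (noOccN X.word.length phat (X.word ++ Y.word) &&
   noOccN X.word.length phat.reverse (X.word ++ Y.word))
def chkO2 : Bool := lef.all fun X => inn.all fun Y => !(X.adj Y) ||
  (noOccN 20 phat (X.word ++ Y.word) && noOccN 25 phat ((X.word ++ Y.word).drop 21) &&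
   noOccN 45 phat.reverse ((X.word ++ Y.word).drop 1))
def chkO3 : Bool := rig.all fun X => 
  (noOccN 27 phat X.word && noOccN 25 phat (X.word.drop 28) &&
   noOccN 7 phat.reverse X.word && noOccN 50 phat.reverse (X.word.drop 8))

theorem chk1_ok : chk1 = true := by decide +kernel
theorem chk2_ok : chk2 = true := by decide +kernel
theorem chk3_ok : chk3 = true := by decide +kernel
theorem chk3p_ok : chk3p = true := by decide +kernel
theorem chk4p_ok : chk4p = true := by decide +kernel
theorem chk4s_ok : chk4s = true := by decide +kernel
theorem chkLen_ok : chkLen = true := by decide +kernel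
theorem chkO1_ok : chkO1 = true := by decide +kernel
theorem chkO2_ok : chkO2 = true := by decide +kernel
theorem chkO3_ok : chkO3 = true := by decide +kernel


/-! ### The construction -/

def img (B : ℕ → List (Fin 3)) (k : ℕ) : List (Fin 3) := (List.range k).flatMap B

theorem img_succ (B : ℕ → List (Fin 3)) (k : ℕ) : img B (k+1) = img B k ++ B k := by
  simp [img, List.range_succ]

theorem at_img (B : ℕ → List (Fin 3)) (K k : ℕ) (h : k < K) :
    At (B k) (img B K) (img B k).length := by
  induction K with
  | zero => omega
  | succ K ih =>
    rw [img_succ]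
    rcases Nat.lt_or_ge k K with h' | h'
    · intro i hi
      have := ih h' i hi
      rw [← this, List.getElem?_append_left]
      have hh : ((B k)[i]?).isSome := by simp [hi]
      rw [← this] at hh
      simpa using hh
    · have : k = K := by omega
      subst this
      intro i hi
      rw [List.getElem?_append_right (by omega)]
      congr 1; omega

def SqF (ω : ℕ → Fin 3) (N : ℕ) : Prop :=
  ∀ s q, 0 < q → s + 2 * q ≤ N → ∃ j, s ≤ j ∧ j < s + q ∧ ω j ≠ ω (j+q)

def bk (ω : ℕ → Fin 3) (β : ℕ → Bool) (N k : ℕ) : Bk :=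
  if k = 0 then .L (ω 0) else if k ≤ N then .I (ω (k-1)) (β (k-1)) else .R (ω (N-1))

theorem bk_zero (ω β N) : bk ω β N 0 = .L (ω 0) := rfl
theorem bk_mid (ω β) (N k : ℕ) (h : k < N) : bk ω β N (k+1) = .I (ω k) (β k) := by
  unfold bk; rw [if_neg (by omega), if_pos (by omega)]; rfl
theorem bk_last (ω β) (N : ℕ) : bk ω β N (N+1) = .R (ω (N-1)) := by
  unfold bk; rw [if_neg (by omega), if_neg (by omega)]

theorem len24 (X : Bk) : 24 ≤ X.word.length := by
  have := List.all_eq_true.1 chkLen_ok X (mem_all X)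
  exact Nat.le_of_ble_eq_true this

theorem c1 (X Y : Bk) : (X.word = Y.word ∧ X.lab = Y.lab) ∨
    ∀ o, o + X.word.length ≤ Y.word.length → ¬ At X.word Y.word o := by
  have := List.all_eq_true.1 (List.all_eq_true.1 chk1_ok X (mem_all X)) Y (mem_all Y)
  simp only [Bool.or_eq_true, Bool.and_eq_true, beq_iff_eq] at this
  have := len24 X
  rcases ‹_ ∨ _› with h | h
  · exact Or.inl h
  · right
    intro o ho
    exact noOccN_sound _ (by omega) _ _ h o (by omega)

theorem c2 (X Y Z : Bk) (h : Y.adj Z = true) (o : ℕ) (ho : o < Y.word.length)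
    (hat : At X.word (Y.word ++ Z.word) o) : o = 0 := by
  have := List.all_eq_true.1 (List.all_eq_true.1 chk2_ok Y (mem_all Y)) Z (mem_all Z)
  rw [h] at this
  have := List.all_eq_true.1 this X (mem_all X)
  have h24 := len24 X
  by_contra h0
  obtain ⟨o, rfl⟩ := Nat.exists_eq_succ_of_ne_zero h0
  refine noOccN_sound _ (by omega) _ _ this o (by omega) ?_
  intro i hi
  rw [← hat i hi, List.getElem?_tail]
  congr 1; omega

theorem c3p (X Y : Bk) (h : X.adj Y = true) : SqFree (X.word ++ Y.word) := by
  have := List.all_eq_true.1 (List.all_eq_true.1 chk3p_ok X (mem_all X)) Y (mem_all Y)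
  rw [h] at this
  exact sqfb_sound _ this

theorem c3 (X Y Z : Bk) (h : X.adj Y = true) (h' : Y.adj Z = true) :
    SqFree (X.word ++ Y.word ++ Z.word) := by
  have := List.all_eq_true.1 (List.all_eq_true.1 chk3_ok X (mem_all X)) Y (mem_all Y)
  rw [h] at this
  have := List.all_eq_true.1 this Z (mem_all Z)
  rw [h'] at this
  exact sqFree_triple _ _ _ (c3p _ _ h) (c3p _ _ h') this

theorem cmp_mis (X Y : List (Fin 3)) (hX : 24 ≤ X.length) (hY : 24 ≤ Y.length)
    (h : cmpB 12 Y X = false) : ∃ d < 12, d < X.length ∧ X[d]? ≠ Y[d]? := by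
  by_contra hc
  push Not at hc
  have := cmpB_of 12 Y X (by omega) (by omega) (fun i hi => (hc i hi (by omega)).symm)
  rw [this] at h
  simp at h

theorem c4p (X Y : Bk) (hX : X ∈ inn) (hY : Y ∈ inn ++ rig) (h : Y.lab ≠ X.lab) :
    ∃ d < 12, d < Y.word.length ∧ Y.word[d]? ≠ X.word[d]? := by
  have := List.all_eq_true.1 (List.all_eq_true.1 chk4p_ok X hX) Y hY
  simp only [Bool.or_eq_true, beq_iff_eq, Bool.not_eq_true'] at this
  rcases this with h' | h'
  · exact absurd h'.symm h
  · exact cmp_mis _ _ (len24 _) (len24 _) h'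

theorem c4s (X Y : Bk) (hX : X ∈ inn) (hY : Y ∈ inn ++ lef) (h : Y.lab ≠ X.lab) :
    ∃ d < 12, d < Y.word.length ∧
      Y.word[Y.word.length - 1 - d]? ≠ X.word[X.word.length - 1 - d]? := by
  have := List.all_eq_true.1 (List.all_eq_true.1 chk4s_ok X hX) Y hY
  simp only [Bool.or_eq_true, beq_iff_eq, Bool.not_eq_true'] at this
  have hx := len24 X
  have hy := len24 Y
  rcases this with h' | h'
  · exact absurd h'.symm h
  · obtain ⟨d, d1, d2, d3⟩ := cmp_mis _ _ (by simpa using hy) (by simpa using hx) h'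
    refine ⟨d, d1, by simpa using d2, ?_⟩
    rw [List.getElem?_reverse (by omega), List.getElem?_reverse (by omega)] at d3
    exact d3

section
variable (ω : ℕ → Fin 3) (β : ℕ → Bool) (N : ℕ)

theorem bk_cases (k : ℕ) : (k = 0 ∧ bk ω β N k = .L (ω 0)) ∨
    (∃ i < N, k = i + 1 ∧ bk ω β N k = .I (ω i) (β i)) ∨
    (N < k ∧ bk ω β N k = .R (ω (N-1))) := by
  rcases Nat.eq_zero_or_pos k with h | h
  · subst h; exact Or.inl ⟨rfl, rfl⟩
  · obtain ⟨i, rfl⟩ := Nat.exists_eq_succ_of_ne_zero (by omega : k ≠ 0)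
    rcases Nat.lt_or_ge i N with h' | h'
    · exact Or.inr (Or.inl ⟨i, h', rfl, bk_mid _ _ _ _ h'⟩)
    · refine Or.inr (Or.inr ⟨by omega, ?_⟩)
      unfold bk; rw [if_neg (by omega), if_neg (by omega)]

theorem bk_adj (hN : 1 ≤ N) (hω : SqF ω N) (k : ℕ) (hk : k + 1 < N + 2) :
    (bk ω β N k).adj (bk ω β N (k+1)) = true := by
  rcases Nat.eq_zero_or_pos k with h | h
  · subst h
    rw [bk_mid _ _ _ _ (by omega)]
    simp [bk_zero, Bk.adj]
  · obtain ⟨i, rfl⟩ := Nat.exists_eq_succ_of_ne_zero (by omega : k ≠ 0)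
    rw [bk_mid _ _ _ _ (by omega)]
    rcases Nat.lt_or_ge (i+1) N with h' | h'
    · rw [Nat.succ_eq_add_one, bk_mid _ _ _ _ h']
      obtain ⟨j, j1, j2, j3⟩ := hω i 1 (by omega) (by omega)
      have : j = i := by omega
      subst this
      simp only [Bk.adj, Bool.not_eq_true', beq_eq_false_iff_ne]
      intro h; exact j3 (Fin.ext h)
    · have : i + 1 = N := by omega
      subst this
      rw [Nat.succ_eq_add_one, bk_last]
      simp [Bk.adj]

theorem full_sqfree (hN : 3 ≤ N) (hω : SqF ω N) :
    SqFree (img (fun k => (bk ω β N k).word) (N+2)) := by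
  refine main_sq _ (N+2) (fun k => (bk ω β N k).word)
    (fun k => (img (fun k => (bk ω β N k).word) k).length) (fun k => (bk ω β N k).lab)
    rfl ?_ rfl ?_ ?_ ?_ ?_ (by omega) ?_ ?_ ?_ ?_ ?_ ?_
  · intro k; rw [img_succ]; simp
  · intro k hk; exact at_img (fun k => (bk ω β N k).word) _ _ hk
  · intro k _
    have := len24 (bk ω β N k)
    omega
  · intro i _ j _ o ho hat
    rcases c1 (bk ω β N i) (bk ω β N j) with h | h
    · exact h.1
    · exact absurd hat (h o ho)
  · intro i _ j hj o ho _ hat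
    exact c2 _ _ _ (bk_adj ω β N (by omega) hω j hj) o ho hat
  · intro k hk
    exact c3 _ _ _ (bk_adj ω β N (by omega) hω k (by omega))
      (bk_adj ω β N (by omega) hω (k+1) (by omega))
  · intro j _ _; exact len24 _
  · intro j hj1 hj2 i hi1 hi2 hl
    refine c4p _ _ ?_ ?_ hl
    · rcases bk_cases ω β N j with h | ⟨a, _, _, h⟩ | h
      · omega
      · rw [h]; exact mem_inn _ _
      · omega
    · rw [List.mem_append]
      rcases bk_cases ω β N i with h | ⟨a, _, _, h⟩ | h
      · omega
      · rw [h]; exact Or.inl (mem_inn _ _)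
      · rw [h.2]; exact Or.inr (mem_rig _)
  · intro j hj1 hj2 i hi1 hl
    refine c4s _ _ ?_ ?_ hl
    · rcases bk_cases ω β N j with h | ⟨a, _, _, h⟩ | h
      · omega
      · rw [h]; exact mem_inn _ _
      · omega
    · rw [List.mem_append]
      rcases bk_cases ω β N i with h | ⟨a, _, _, h⟩ | h
      · rw [h.2]; exact Or.inr (mem_lef _)
      · rw [h]; exact Or.inl (mem_inn _ _)
      · omega
  · intro i _ j _ h
    rcases c1 (bk ω β N i) (bk ω β N j) with h' | h'
    · exact h'.2
    · refine absurd ?_ (h' 0 (by rw [h]; omega))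
      intro t ht
      rw [h, Nat.zero_add]
  · intro s q hq hs
    have hI : ∀ i < N, (bk ω β N (i+1)).lab = (ω i).val := by
      intro i hi; rw [bk_mid _ _ _ _ hi]; rfl
    have hR : (bk ω β N (N+1)).lab = 4 := by rw [bk_last]; rfl
    have hL : (bk ω β N 0).lab = 3 := rfl
    rcases Nat.eq_zero_or_pos s with h | h
    · subst h
      refine ⟨0, by omega, by omega, ?_⟩
      obtain ⟨p, rfl⟩ := Nat.exists_eq_succ_of_ne_zero (by omega : q ≠ 0)
      have := hI p (by omega)
      rw [Nat.zero_add, Nat.succ_eq_add_one, this, hL]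
      have := (ω p).isLt
      omega
    · obtain ⟨s, rfl⟩ := Nat.exists_eq_succ_of_ne_zero (by omega : s ≠ 0)
      rcases Nat.lt_or_ge (s + 1 + 2 * q) (N+2) with h' | h'
      · obtain ⟨j, j1, j2, j3⟩ := hω s q hq (by omega)
        refine ⟨j+1, by omega, by omega, ?_⟩
        have e1 := hI j (by omega)
        have e2 := hI (j+q) (by omega)
        rw [show j + 1 + q = j + q + 1 by omega, e1, e2]
        intro h; exact j3 (Fin.ext h)
      · refine ⟨s + q, by omega, by omega, ?_⟩
        obtain ⟨p, rfl⟩ := Nat.exists_eq_succ_of_ne_zero (by omega : q ≠ 0)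
        have e1 := hI (s+p) (by omega)
        rw [show s + (p+1) + (p+1) = N + 1 by omega, hR, show s + (p+1) = s + p + 1 by omega, e1]
        have := (ω (s+p)).isLt
        omega

/-- the inner word -/
def mid : List (Fin 3) := img (fun k => hb (ω k) (β k)) N

theorem img_full : img (fun k => (bk ω β N k).word) (N+2) =
    pal ++ (ac (ω 0) ++ mid ω β N ++ (ac (ω (N-1))).reverse) ++ pal := by
  have key : ∀ k, k ≤ N → img (fun k => (bk ω β N k).word) (k+1) =
      pal ++ ac (ω 0) ++ img (fun k => hb (ω k) (β k)) k := by
    intro k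
    induction k with
    | zero => intro _; rw [img_succ]; simp [img, bk_zero, Bk.word]
    | succ k ih =>
      intro hk
      rw [img_succ, ih (by omega), img_succ, bk_mid _ _ _ _ (by omega)]
      simp [Bk.word]
  rw [img_succ, key N le_rfl, bk_last]
  simp [mid, Bk.word]

theorem mid_sqfree (hN : 3 ≤ N) (hω : SqF ω N) : SqFree (mid ω β N) := by
  have := full_sqfree ω β N hN hω
  rw [img_full] at this
  intro u hu h
  refine this u hu (h.trans ?_)
  refine ⟨pal ++ ac (ω 0), (ac (ω (N-1))).reverse ++ pal, ?_⟩
  simp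
end

theorem hb_len (c : Fin 3) (b : Bool) : (hb c b).length = 24 + b.toNat := by
  fin_cases c <;> cases b <;> rfl

theorem mid_len (ω β N) : (mid ω β N).length = 24 * N + ∑ i ∈ Finset.range N, (β i).toNat := by
  induction N with
  | zero => simp [mid, img]
  | succ N ih =>
    unfold mid at *
    rw [img_succ, List.length_append, ih, hb_len, Finset.sum_range_succ]
    omega

theorem exists_sqf (N : ℕ) : ∃ ω, SqF ω (N + 3) := by
  induction N with
  | zero =>
    refine ⟨fun k => if k = 0 then 0 else if k = 1 then 1 else 2, ?_⟩
    intro s q hq hs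
    refine ⟨s, le_rfl, by omega, ?_⟩
    have : q = 1 := by omega
    subst this
    have : s = 0 ∨ s = 1 := by omega
    rcases this with rfl | rfl <;> simp
  | succ N ih =>
    obtain ⟨ω, hω⟩ := ih
    have hs := (sqFree_iff _).1 (mid_sqfree ω (fun _ => false) (N+3) (by omega) hω)
    have hl := mid_len ω (fun _ => false) (N+3)
    generalize mid ω (fun _ => false) (N+3) = w at hs hl
    refine ⟨fun j => (w[j]?).getD 0, ?_⟩
    intro s q hq hsq
    by_contra hc
    push Not at hc
    refine hs s q ⟨hq, by omega, ?_⟩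
    intro j h1 h2
    have := hc j h1 h2
    rw [List.getElem?_eq_getElem (by omega), List.getElem?_eq_getElem (by omega)] at this ⊢
    simpa using this


/-! ### Occurrences and nice words -/

theorem At.le {α : Type*} {X W : List α} {j : ℕ} (h : At X W j) (hX : 0 < X.length) :
    j + X.length ≤ W.length := by
  have := h (X.length - 1) (by omega)
  by_contra hc
  rw [List.getElem?_eq_none (by omega), List.getElem?_eq_getElem (by omega)] at this
  simp at this

theorem At.sub {α : Type*} {X Y W : List α} {j c : ℕ} (h : At X W j) (hY : At Y W c)
    (h1 : c ≤ j) (h2 : j + X.length ≤ c + Y.length) : At X Y (j - c) := by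
  intro i hi
  rw [← h i hi, ← hY _ (by omega)]
  congr 1; omega

theorem At.trans {α : Type*} {X Y W : List α} {j c : ℕ} (h : At X Y j) (hY : At Y W c)
    (h2 : j + X.length ≤ Y.length) : At X W (c + j) := by
  intro i hi
  rw [← h i hi, ← hY _ (by omega)]
  congr 1; omega

theorem At.append {α : Type*} {Y Z W : List α} {c : ℕ} (h : At Y W c)
    (h' : At Z W (c + Y.length)) : At (Y ++ Z) W c := by
  intro i hi
  rw [List.length_append] at hi
  by_cases hh : i < Y.length
  · rw [List.getElem?_append_left hh, h i hh]
  · rw [List.getElem?_append_right (by omega), ← h' _ (by omega)]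
    congr 1; omega

theorem At.drop {α : Type*} {X W : List α} {o : ℕ} (h : At X W o) (d : ℕ) (hd : d ≤ o) :
    At X (W.drop d) (o - d) := by
  intro i hi
  rw [← h i hi, List.getElem?_drop]
  congr 1; omega

theorem at_mid {α : Type*} (a u b : List α) : At u (a ++ u ++ b) a.length := by
  intro i hi
  rw [List.append_assoc, List.getElem?_append_right (by omega),
    List.getElem?_append_left (by omega)]
  congr 1; omega

theorem at_mid' {α : Type*} {W : List α} (a u b : List α) (j : ℕ) (h : W = a ++ u ++ b)
    (hj : j = a.length) : At u W j := by
  subst h; subst hj; exact at_mid a u b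

theorem phat_len : phat.length = 19 := rfl
theorem ac_len (c : Fin 3) : (ac c).length = 7 := by fin_cases c <;> rfl

theorem locate_img (B : ℕ → List (Fin 3)) (K j : ℕ) (hj : j < (img B K).length) :
    ∃ k < K, (img B k).length ≤ j ∧ j < (img B (k+1)).length := by
  induction K with
  | zero => simp [img] at hj
  | succ K ih =>
    by_cases h : j < (img B K).length
    · obtain ⟨k, h1, h2⟩ := ih h
      exact ⟨k, by omega, h2⟩
    · exact ⟨K, by omega, by omega, hj⟩

theorem o1 (X Y : Bk) (hX : X ∈ inn) (hY : Y ∈ inn ++ rig) (h : X.adj Y = true) (o : ℕ)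
    (ho : o < X.word.length) : ¬ At phat (X.word ++ Y.word) o ∧
      ¬ At phat.reverse (X.word ++ Y.word) o := by
  have := List.all_eq_true.1 (List.all_eq_true.1 chkO1_ok X hX) Y hY
  rw [h] at this
  simp only [Bool.not_true, Bool.false_or, Bool.and_eq_true] at this
  exact ⟨noOccN_sound _ (by decide) _ _ this.1 o ho, noOccN_sound _ (by decide) _ _ this.2 o ho⟩

theorem o2 (X Y : Bk) (hX : X ∈ lef) (hY : Y ∈ inn) (h : X.adj Y = true) (o : ℕ)
    (ho : o < 46) : (At phat (X.word ++ Y.word) o → o = 20) ∧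
      (At phat.reverse (X.word ++ Y.word) o → o = 0) := by
  have := List.all_eq_true.1 (List.all_eq_true.1 chkO2_ok X hX) Y hY
  rw [h] at this
  simp only [Bool.not_true, Bool.false_or, Bool.and_eq_true] at this
  obtain ⟨⟨a1, a2⟩, a3⟩ := this
  constructor
  · intro hat
    by_contra hc
    rcases Nat.lt_or_ge o 20 with h | h
    · exact noOccN_sound _ (by decide) _ _ a1 o h hat
    · exact noOccN_sound _ (by decide) _ _ a2 (o-21) (by omega) (hat.drop 21 (by omega))
  · intro hat
    by_contra hc
    exact noOccN_sound _ (by decide) _ _ a3 (o-1) (by omega) (hat.drop 1 (by omega))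

theorem o3 (X : Bk) (hX : X ∈ rig) (o : ℕ) (ho : o < 46) : (At phat X.word o → o = 27) ∧
      (At phat.reverse X.word o → o = 7) := by
  have := List.all_eq_true.1 chkO3_ok X hX
  simp only [Bool.and_eq_true] at this
  obtain ⟨⟨⟨a1, a2⟩, a3⟩, a4⟩ := this
  constructor
  · intro hat
    by_contra hc
    rcases Nat.lt_or_ge o 27 with h | h
    · exact noOccN_sound _ (by decide) _ _ a1 o h hat
    · exact noOccN_sound _ (by decide) _ _ a2 (o-28) (by omega) (hat.drop 28 (by omega))
  · intro hat
    by_contra hc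
    rcases Nat.lt_or_ge o 7 with h | h
    · exact noOccN_sound _ (by decide) _ _ a3 o h hat
    · exact noOccN_sound _ (by decide) _ _ a4 (o-8) (by omega) (hat.drop 8 (by omega))

theorem full_occ (ω β N) (hN : 3 ≤ N) (hω : SqF ω N) (j : ℕ) :
    (At phat (img (fun k => (bk ω β N k).word) (N+2)) j →
      j = 20 ∨ j + 19 = (img (fun k => (bk ω β N k).word) (N+2)).length) ∧
    (At phat.reverse (img (fun k => (bk ω β N k).word) (N+2)) j →
      j = 0 ∨ j + 39 = (img (fun k => (bk ω β N k).word) (N+2)).length) := by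
  have gen : ∀ X : List (Fin 3), X.length = 19 →
      At X (img (fun k => (bk ω β N k).word) (N+2)) j →
      (j < 46 ∧ At X ((bk ω β N 0).word ++ (bk ω β N 1).word) j) ∨
      (∃ k, 0 < k ∧ k ≤ N ∧ ∃ o < (bk ω β N k).word.length,
        At X ((bk ω β N k).word ++ (bk ω β N (k+1)).word) o) ∨
      (∃ o < 46, At X (bk ω β N (N+1)).word o ∧
        j + 46 = o + (img (fun k => (bk ω β N k).word) (N+2)).length) := by
    intro X hX hat
    have hle := hat.le (by omega)
    obtain ⟨k, hk, k1, k2⟩ := locate_img (fun k => (bk ω β N k).word) (N+2) j (by omega)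
    have a1 := at_img (fun k => (bk ω β N k).word) (N+2) k hk
    have l1 := congrArg List.length (img_succ (fun k => (bk ω β N k).word) k)
    rw [List.length_append] at l1
    rcases Nat.lt_or_ge k (N+1) with h | h
    · have a2 := at_img (fun k => (bk ω β N k).word) (N+2) (k+1) (by omega)
      rw [l1] at a2
      have a3 := a1.append a2
      have h24 := len24 (bk ω β N (k+1))
      have a4 := hat.sub a3 k1 (by rw [List.length_append]; omega)
      rcases Nat.eq_zero_or_pos k with h0 | h0
      · subst h0
        left
        have e : (img (fun k => (bk ω β N k).word) 0).length = 0 := rfl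
        have e2 : ((bk ω β N 0).word).length = 46 := by
          rw [bk_zero, Bk.word, List.length_append, pal_len, ac_len]
        refine ⟨by omega, ?_⟩
        rw [e] at a4
        exact a4
      · right; left
        exact ⟨k, h0, by omega, _, by omega, a4⟩
    · have : k = N + 1 := by omega
      subst this
      right; right
      have e2 : ((bk ω β N (N+1)).word).length = 46 := by
        rw [bk_last, Bk.word, List.length_append, List.length_reverse, pal_len, ac_len]
      have l2 : (img (fun k => (bk ω β N k).word) (N+2)).length = _ := l1
      exact ⟨_, by omega, hat.sub a1 k1 (by omega), by omega⟩
  have inner : ∀ k, 0 < k → k ≤ N → ∀ o < (bk ω β N k).word.length,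
      ¬ At phat ((bk ω β N k).word ++ (bk ω β N (k+1)).word) o ∧
      ¬ At phat.reverse ((bk ω β N k).word ++ (bk ω β N (k+1)).word) o := by
    intro k h1 h2 o ho
    refine o1 _ _ ?_ ?_ (bk_adj ω β N (by omega) hω k (by omega)) o ho
    · rcases bk_cases ω β N k with h | ⟨a, _, _, h⟩ | h
      · omega
      · rw [h]; exact mem_inn _ _
      · omega
    · rw [List.mem_append]
      rcases bk_cases ω β N (k+1) with h | ⟨a, _, _, h⟩ | h
      · omega
      · rw [h]; exact Or.inl (mem_inn _ _)
      · rw [h.2]; exact Or.inr (mem_rig _)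
  have m1 : bk ω β N 1 ∈ inn := by
    rw [bk_mid ω β N 0 (by omega)]; exact mem_inn _ _
  have m0 : bk ω β N 0 ∈ lef := mem_lef _
  have mR : bk ω β N (N+1) ∈ rig := by rw [bk_last]; exact mem_rig _
  have ad := bk_adj ω β N (by omega) hω 0 (by omega)
  constructor
  · intro hat
    rcases gen phat rfl hat with ⟨h1, h2⟩ | ⟨k, k1, k2, o, ho, h⟩ | ⟨o, ho, h1, h2⟩
    · exact Or.inl ((o2 _ _ m0 m1 ad j h1).1 h2)
    · exact absurd h (inner k k1 k2 o ho).1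
    · have := (o3 _ mR o ho).1 h1
      right; omega
  · intro hat
    rcases gen phat.reverse rfl hat with ⟨h1, h2⟩ | ⟨k, k1, k2, o, ho, h⟩ | ⟨o, ho, h1, h2⟩
    · exact Or.inl ((o2 _ _ m0 m1 ad j h1).2 h2)
    · exact absurd h (inner k k1 k2 o ho).2
    · have := (o3 _ mR o ho).2 h1
      right; omega

theorem occ_pred (u v : List (Fin 3)) (i : ℕ) :
    ((v.drop i).take u.length == u) = true ↔ At u v i := by
  rw [beq_iff_eq]
  constructor
  · intro h t ht
    rw [← List.getElem?_drop, ← List.getElem?_take_of_lt ht, h]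
  · intro h
    apply List.ext_getElem?
    intro t
    by_cases ht : t < u.length
    · rw [List.getElem?_take_of_lt ht, List.getElem?_drop, h t ht]
    · rw [List.getElem?_eq_none (by simp; omega), List.getElem?_eq_none (by omega)]

theorem occ_finset (u v : List (Fin 3)) (hu : 0 < u.length) :
    ∃ F : Finset ℕ, F.card = occCount u v ∧ ∀ i, i ∈ F ↔ At u v i := by
  refine ⟨((List.range v.length).filter (fun i => (v.drop i).take u.length == u)).toFinset, ?_, ?_⟩
  · rw [List.toFinset_card_of_nodup (List.nodup_range.filter _), occCount,
      List.countP_eq_length_filter]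
  · intro i
    rw [List.mem_toFinset, List.mem_filter, occ_pred, List.mem_range]
    constructor
    · exact fun h => h.2
    · intro h
      have := h.le hu
      exact ⟨by omega, h⟩

theorem occ_two_iff (u v : List (Fin 3)) (hu : 0 < u.length) (a b : ℕ) (hab : a ≠ b)
    (ha : At u v a) (hb : At u v b) :
    occCount u v = 2 ↔ ∀ j, At u v j → j = a ∨ j = b := by
  obtain ⟨F, hF, hm⟩ := occ_finset u v hu
  have hsub : ({a, b} : Finset ℕ) ⊆ F := by
    intro x hx
    simp only [Finset.mem_insert, Finset.mem_singleton] at hx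
    rcases hx with rfl | rfl
    · exact (hm _).2 ha
    · exact (hm _).2 hb
  have hc : ({a, b} : Finset ℕ).card = 2 := Finset.card_pair hab
  rw [← hF]
  constructor
  · intro h j hj
    have := Finset.eq_of_subset_of_card_le hsub (by omega)
    have hj' := (hm j).2 hj
    rw [← this] at hj'
    simpa using hj'
  · intro h
    rw [← hc]
    congr 1
    apply Finset.Subset.antisymm _ hsub
    intro x hx
    simpa using h x ((hm x).1 hx)

def Nice' (v : List (Fin 3)) : Prop :=
  SqFree (pal ++ v ++ pal) ∧
  (∀ j, At phat (pal ++ v ++ pal) j → j = 20 ∨ j = v.length + 59) ∧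
  (∀ j, At phat.reverse (pal ++ v ++ pal) j → j = 0 ∨ j = v.length + 39)

theorem at_pal_phat : At phat pal 20 := at_mid' (phat.reverse ++ [0]) phat [] 20 rfl rfl
theorem at_pal_rev : At phat.reverse pal 0 := at_mid' [] phat.reverse (0 :: phat) 0 rfl rfl

theorem at_pal0 (v : List (Fin 3)) : At pal (pal ++ v ++ pal) 0 :=
  at_mid' [] pal (v ++ pal) 0 (by simp) rfl
theorem at_pal1 (v : List (Fin 3)) : At pal (pal ++ v ++ pal) (v.length + 39) :=
  at_mid' (pal ++ v) pal [] _ (by simp) (by simp [pal_len]; omega)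

theorem isNice_iff (v : List (Fin 3)) : IsNice v ↔ Nice' v := by
  unfold IsNice Nice'
  rw [occ_two_iff phat _ (by decide) 20 (v.length + 59) (by omega)
      (by simpa using at_pal_phat.trans (at_pal0 v) (by decide))
      (by simpa [Nat.add_assoc] using at_pal_phat.trans (at_pal1 v) (by decide)),
    occ_two_iff phat.reverse _ (by decide) 0 (v.length + 39) (by omega)
      (by simpa using at_pal_rev.trans (at_pal0 v) (by decide))
      (by simpa [Nat.add_assoc] using at_pal_rev.trans (at_pal1 v) (by decide))]

theorem at_reverse {α : Type*} {X W : List α} {j : ℕ} (h : At X W.reverse j) (hX : 0 < X.length) :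
    At X.reverse W (W.length - j - X.length) := by
  have hle := h.le hX
  rw [List.length_reverse] at hle
  intro i hi
  rw [List.length_reverse] at hi
  rw [List.getElem?_reverse hi, ← h _ (by omega), List.getElem?_reverse (by omega)]
  congr 1; omega

theorem sqFree_reverse {α : Type*} {W : List α} (h : SqFree W) : SqFree W.reverse := by
  intro u hu hi
  refine h u.reverse (by simpa using hu) ?_
  rw [← List.reverse_infix]
  simpa using hi

theorem pal_reverse : pal.reverse = pal := rfl

theorem Nice'.reverse {v : List (Fin 3)} (h : Nice' v) : Nice' v.reverse := by
  obtain ⟨h1, h2, h3⟩ := h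
  have e : pal ++ v.reverse ++ pal = (pal ++ v ++ pal).reverse := by
    simp [pal_reverse]
  have hl : (pal ++ v ++ pal).length = v.length + 78 := by simp [pal_len]; omega
  refine ⟨by rw [e]; exact sqFree_reverse h1, ?_, ?_⟩
  · intro j hj
    rw [e] at hj
    have hle := hj.le (by decide)
    rw [List.length_reverse, hl, phat_len] at hle
    have := h3 _ (at_reverse hj (by decide))
    rw [hl, phat_len] at this
    rw [List.length_reverse]
    omega
  · intro j hj
    rw [e] at hj
    have hle := hj.le (by decide)
    rw [List.length_reverse, List.length_reverse, hl, phat_len] at hle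
    have := at_reverse hj (by decide)
    rw [List.reverse_reverse] at this
    have := h2 _ this
    rw [hl, List.length_reverse, phat_len] at this
    rw [List.length_reverse]
    omega

theorem mid_nice (ω β N) (hN : 3 ≤ N) (hω : SqF ω N) :
    IsNice (ac (ω 0) ++ mid ω β N ++ (ac (ω (N-1))).reverse) := by
  rw [isNice_iff]
  have h1 := full_sqfree ω β N hN hω
  have h2 := full_occ ω β N hN hω
  rw [img_full] at h1 h2
  have hl : ∀ v : List (Fin 3), (pal ++ v ++ pal).length = v.length + 78 := by
    intro v; simp [pal_len]; omega
  rw [hl] at h2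
  refine ⟨h1, fun j hj => ?_, fun j hj => ?_⟩
  · have := (h2 j).1 hj; omega
  · have := (h2 j).2 hj; omega

/-! ### Gluing nice words -/

theorem glue (n : ℕ) (u v l : List (Fin 3)) (hu : Nice' u) (hv : Nice' v)
    (hun : u.length = n) (hvn : v.length = n) (hn : 100 < n) (huv : u ≠ v)
    (hl : l = [] ∨ Nice' l)
    (hbad : ∀ t, 1 ≤ t → t ≤ n → v ≠ l.take t ++ u.drop t) :
    SqFree (pal ++ u ++ pal ++ v ++ pal ++ l) := by
  obtain ⟨w, hw⟩ : ∃ w, w = pal ++ u ++ pal ++ v ++ pal ++ l := ⟨_, rfl⟩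
  obtain ⟨m, hm⟩ : ∃ m, m = n + 39 := ⟨_, rfl⟩
  have wl : w.length = 2 * m + 39 + l.length := by
    rw [hw]; simp [pal_len, hun, hvn]; omega
  -- facts on `pal ++ l`
  have hL : SqFree (pal ++ l) ∧ (∀ j, At phat (pal ++ l) j → j = 20) ∧
      (∀ j, At phat.reverse (pal ++ l) j → j = 0) := by
    have aux : ∀ x y : List (Fin 3), Nice' x → pal ++ y <+: pal ++ x ++ pal →
        y.length ≤ x.length → SqFree (pal ++ y) ∧ (∀ j, At phat (pal ++ y) j → j = 20) ∧
      (∀ j, At phat.reverse (pal ++ y) j → j = 0) := by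
      rintro x y ⟨x1, x2, x3⟩ ⟨z, hz⟩ hxy
      have hat : At (pal ++ y) (pal ++ x ++ pal) 0 := at_mid' [] _ z 0 (by simp [← hz]) rfl
      refine ⟨fun s hs hi => x1 s hs (hi.trans ⟨[], z, by simpa using hz⟩), ?_, ?_⟩
      · intro j hj
        have hle := hj.le (by decide)
        have := x2 _ (hj.trans hat hle)
        rw [List.length_append, phat_len, pal_len] at hle
        omega
      · intro j hj
        have hle := hj.le (by decide)
        have := x3 _ (hj.trans hat hle)
        rw [List.length_append, List.length_reverse, phat_len, pal_len] at hle
        omega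
    rcases hl with rfl | hl
    · exact aux u [] hu ⟨u ++ pal, by simp⟩ (by simp)
    · exact aux l l hl ⟨pal, by simp⟩ le_rfl
  have a0 : At (pal ++ u ++ pal) w 0 :=
    at_mid' [] _ (v ++ pal ++ l) 0 (by rw [hw]; simp) rfl
  have a1 : At (pal ++ v ++ pal) w m :=
    at_mid' (pal ++ u) _ l m (by rw [hw]; simp) (by simp [pal_len, hun]; omega)
  have a2 : At (pal ++ l) w (2 * m) :=
    at_mid' (pal ++ u ++ pal ++ v) _ [] _ (by rw [hw]; simp) (by simp [pal_len, hun, hvn]; omega)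
  have au : At u w 39 := at_mid' pal u (pal ++ v ++ pal ++ l) 39 (by rw [hw]; simp) rfl
  have av : At v w (m + 39) := at_mid' (pal ++ u ++ pal) v (pal ++ l) _ (by rw [hw]; simp)
    (by simp [pal_len, hun]; omega)
  have al : At l w (2 * m + 39) := at_mid' (pal ++ u ++ pal ++ v ++ pal) l [] _
    (by rw [hw]; simp) (by simp [pal_len, hun, hvn]; omega)
  have l0 : (pal ++ u ++ pal).length = m + 39 := by simp [pal_len, hun]; omega
  have l1 : (pal ++ v ++ pal).length = m + 39 := by simp [pal_len, hvn]; omega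
  have l2 : (pal ++ l).length = l.length + 39 := by rw [List.length_append, pal_len]; omega
  have p1 : At pal w m := by
    have := at_mid' (W := w) (pal ++ u) pal (v ++ pal ++ l) m (by rw [hw]; simp)
      (by simp [pal_len, hun]; omega)
    exact this
  have p2 : At pal w (2 * m) := at_mid' (W := w) (pal ++ u ++ pal ++ v) pal l _ (by rw [hw])
      (by simp [pal_len, hun, hvn]; omega)
  have occ : ∀ j, At phat w j → j = 20 ∨ j = m + 20 ∨ j = 2 * m + 20 := by
    intro j hj
    have hle := hj.le (by decide)
    rw [phat_len] at hle
    by_cases c1 : j + 19 ≤ m + 39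
    · have := hu.2.1 _ (hj.sub a0 (by omega) (by rw [phat_len, l0]; omega))
      omega
    by_cases c2 : j + 19 ≤ 2 * m + 39
    · have := hv.2.1 _ (hj.sub a1 (by omega) (by rw [phat_len, l1]; omega))
      omega
    · have := hL.2.1 _ (hj.sub a2 (by omega) (by rw [phat_len, l2]; omega))
      omega
  have occ' : ∀ j, At phat.reverse w j → j = 0 ∨ j = m ∨ j = 2 * m := by
    intro j hj
    have hle := hj.le (by decide)
    rw [List.length_reverse, phat_len] at hle
    by_cases c1 : j + 19 ≤ m + 39
    · have := hu.2.2 _ (hj.sub a0 (by omega) (by rw [List.length_reverse, phat_len, l0]; omega))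
      omega
    by_cases c2 : j + 19 ≤ 2 * m + 39
    · have := hv.2.2 _ (hj.sub a1 (by omega) (by rw [List.length_reverse, phat_len, l1]; omega))
      omega
    · have := hL.2.2 _ (hj.sub a2 (by omega) (by rw [List.length_reverse, phat_len, l2]; omega))
      omega
  rw [← hw, sqFree_iff]
  intro s q hsq
  have n0 : ¬ (s + 2 * q ≤ m + 39) := fun h =>
    (sqFree_iff _).1 hu.1 _ _ (hsq.of_at a0 (by omega) (by rw [l0]; omega))
  have n1 : ¬ (m ≤ s ∧ s + 2 * q ≤ 2 * m + 39) := fun h =>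
    (sqFree_iff _).1 hv.1 _ _ (hsq.of_at a1 (by omega) (by rw [l1]; omega))
  obtain ⟨hq, hle, he⟩ := id hsq
  have n2 : ¬ (2 * m ≤ s) := fun h =>
    (sqFree_iff _).1 hL.1 _ _ (hsq.of_at a2 (by omega) (by rw [l2]; omega))
  have up : ∀ X : List (Fin 3), ∀ j, At X w j → s ≤ j → j + X.length ≤ s + q → At X w (j+q) := by
    intro X j hX h1 h2 i hi
    rw [← hX i hi, he (j+i) (by omega) (by omega)]
    congr 1; omega
  have down : ∀ X : List (Fin 3), ∀ j, At X w j → s + q ≤ j → j + X.length ≤ s + 2 * q →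
      At X w (j-q) := by
    intro X j hX h1 h2 i hi
    rw [← hX i hi, he (j-q+i) (by omega) (by omega)]
    congr 1; omega
  have main : (q = m ∧ s ≤ m + 20) ∨ (q = 2 * m ∧ s ≤ 20) := by
    have step : ∀ k, At pal w k → s ≤ k → k + 39 ≤ s + 2 * q →
        (s + q ≤ k + 20 ∧ (k + 20 - q = 20 ∨ k + 20 - q = m + 20 ∨ k + 20 - q = 2 * m + 20)) ∨
        (k + q = 0 ∨ k + q = m ∨ k + q = 2 * m) := by
      intro k hk k1 k2
      by_cases h : s + q ≤ k + 20
      · left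
        exact ⟨h, occ _ (down phat (k+20) (at_pal_phat.trans hk (by decide)) h
          (by rw [phat_len]; omega))⟩
      · right
        exact occ' _ (up phat.reverse k (at_pal_rev.trans hk (by decide)) k1
          (by rw [List.length_reverse, phat_len]; omega))
    by_cases h : s ≤ m
    · have := step m p1 h (by omega)
      omega
    · have := step (2 * m) p2 (by omega) (by omega)
      omega
  rcases main with ⟨rfl, hs⟩ | ⟨rfl, hs⟩
  · have comb : ∀ t, t ≤ n → (t < n → s ≤ 39 + t ∧ 39 + t ≤ s + q) → t ≤ l.length →
        (0 < t → s ≤ q + 39 ∧ q + 39 + t ≤ s + q) → (39 + n ≤ s + q ∨ t = n) → 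
        v = l.take t ++ u.drop t := by
      intro t ht h1 h3 h4 h5
      apply List.ext_getElem?
      intro i
      by_cases hi : i < n
      · rw [← av i (by omega)]
        by_cases hit : i < t
        · rw [List.getElem?_append_left (by simp; omega), List.getElem?_take_of_lt hit,
            ← al i (by omega), he _ (by omega) (by omega)]
          congr 1; omega
        · rw [List.getElem?_append_right (by simp; omega), List.getElem?_drop,
            List.length_take, show t + (i - min t l.length) = i by omega,
            ← au i (by omega), he (39+i) (by omega) (by omega)]
          congr 1; omega
      · rw [List.getElem?_eq_none (by omega), List.getElem?_eq_none (by simp; omega)]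
    by_cases c1 : s ≤ 39
    · have := comb 0 (by omega) (by omega) (by omega) (by omega) (by omega)
      simp at this
      exact huv this.symm
    · by_cases c2 : s ≤ q
      · exact hbad (s - 39) (by omega) (by omega)
          (comb (s-39) (by omega) (by omega) (by omega) (by omega) (by omega))
      · have hln : n ≤ l.length := by omega
        exact hbad n (by omega) le_rfl 
          (comb n (by omega) (by omega) (by omega) (by omega) (by omega))
  · have := occ' _ (up phat.reverse m (at_pal_rev.trans p1 (by decide)) (by omega)
      (by rw [List.length_reverse, phat_len]; omega))
    omega


/-! ### Independent sets -/

theorem exists_indep {α : Type*} [DecidableEq α] (out : α → Finset α) (d : ℕ)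
    (hd : ∀ u, (out u).card ≤ d) : ∀ (k : ℕ) (T : Finset α), T.card ≤ k →
    ∃ S ⊆ T, (∀ u ∈ S, ∀ v ∈ S, u ≠ v → v ∉ out u) ∧ T.card ≤ S.card * (2 * d + 1) := by
  intro k
  induction k with
  | zero =>
    intro T hT
    exact ⟨∅, by simp, by simp, by simpa using hT⟩
  | succ k ih =>
    intro T hT
    rcases T.eq_empty_or_nonempty with rfl | hne
    · exact ⟨∅, by simp, by simp, by simp⟩
    have hsum : ∑ v ∈ T, (T.filter (fun u => v ∈ out u)).card ≤ ∑ v ∈ T, d := by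
      have : ∑ v ∈ T, (T.filter (fun u => v ∈ out u)).card =
          ∑ u ∈ T, (T.filter (fun v => v ∈ out u)).card := by
        simp only [Finset.card_filter]
        exact Finset.sum_comm
      rw [this]
      refine Finset.sum_le_sum fun u _ => le_trans (Finset.card_le_card ?_) (hd u)
      intro x hx
      exact (Finset.mem_filter.1 hx).2
    obtain ⟨v, hv, hvd⟩ := Finset.exists_le_of_sum_le hne hsum
    obtain ⟨T', hT'⟩ : ∃ T', T' = T.filter (fun x => x ≠ v ∧ x ∉ out v ∧ v ∉ out x) := ⟨_, rfl⟩
    have hsub : T' ⊆ T := by rw [hT']; exact Finset.filter_subset _ _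
    have hlt : T'.card < T.card := by
      refine Finset.card_lt_card ⟨hsub, fun h => ?_⟩
      have := h hv
      rw [hT', Finset.mem_filter] at this
      exact this.2.1 rfl
    have hcov : T ⊆ T' ∪ ({v} ∪ (out v ∪ T.filter (fun u => v ∈ out u))) := by
      intro x hx
      simp only [hT', Finset.mem_union, Finset.mem_filter, Finset.mem_singleton]
      tauto
    have hc1 : T.card ≤ T'.card + (1 + (d + d)) := by
      refine (Finset.card_le_card hcov).trans ((Finset.card_union_le _ _).trans ?_)
      have h1 := Finset.card_union_le {v} (out v ∪ T.filter (fun u => v ∈ out u))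
      have h2 := Finset.card_union_le (out v) (T.filter (fun u => v ∈ out u))
      have h3 := hd v
      rw [Finset.card_singleton] at h1
      omega
    obtain ⟨S, hS, hS1, hS2⟩ := ih T' (by omega)
    have hvS : v ∉ S := fun h => by
      have := hS h
      rw [hT', Finset.mem_filter] at this
      exact this.2.1 rfl
    have hmem : ∀ x ∈ S, x ∉ out v ∧ v ∉ out x := fun x h => by
      have := hS h
      rw [hT', Finset.mem_filter] at this
      exact this.2.2
    refine ⟨insert v S, ?_, ?_, ?_⟩
    · intro x hx
      rcases Finset.mem_insert.1 hx with rfl | hx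
      · exact hv
      · exact hsub (hS hx)
    · intro a ha b hb hab
      rcases Finset.mem_insert.1 ha with ha1 | ha1 <;>
        rcases Finset.mem_insert.1 hb with hb1 | hb1
      · exact absurd (ha1.trans hb1.symm) hab
      · rw [ha1]; exact (hmem b hb1).1
      · rw [hb1]; exact (hmem a ha1).2
      · exact hS1 a ha1 b hb1 hab
    · rw [Finset.card_insert_of_notMem hvS, Nat.add_mul]
      omega

/-! ### Many nice words -/

theorem hb15 (c : Fin 3) (b : Bool) : (hb c b)[15]? = some (if b then c + 2 else c) := by
  fin_cases c <;> cases b <;> rfl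

theorem mid_inj (ω : ℕ → Fin 3) (β β' : ℕ → Bool) (N : ℕ) (h : mid ω β N = mid ω β' N) :
    ∀ k < N, β k = β' k := by
  intro k
  induction k using Nat.strong_induction_on with
  | _ k ih =>
    intro hk
    have e : img (fun k => hb (ω k) (β k)) k = img (fun k => hb (ω k) (β' k)) k := by
      have : ∀ j ≤ k, img (fun k => hb (ω k) (β k)) j = img (fun k => hb (ω k) (β' k)) j := by
        intro j
        induction j with
        | zero => intro _; rfl
        | succ j ihj =>
          intro hj
          rw [img_succ, img_succ, ihj (by omega), ih j (by omega) (by omega)]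
      exact this k le_rfl
    have a1 := at_img (fun k => hb (ω k) (β k)) N k hk 15 (by rw [hb_len]; omega)
    have a2 := at_img (fun k => hb (ω k) (β' k)) N k hk 15 (by rw [hb_len]; omega)
    unfold mid at h
    rw [← e, ← h, a1] at a2
    simp only [hb15] at a2
    generalize ω k = c at a2
    revert a2
    cases β k <;> cases β' k <;> fin_cases c <;> decide

def bits (r0 k0 : ℕ) (c : ℕ → Bool) (i : ℕ) : Bool :=
  if i < k0 then decide (i < r0)
  else if (i - k0) % 2 = 0 then c ((i - k0) / 2) else !(c ((i - k0) / 2))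

theorem bits_sum0 (r0 k0 : ℕ) (c : ℕ → Bool) (hr : r0 ≤ k0) :
    ∑ i ∈ Finset.range k0, (bits r0 k0 c i).toNat = r0 := by
  have : ∀ k ≤ k0, ∑ i ∈ Finset.range k, (bits r0 k0 c i).toNat = min k r0 := by
    intro k
    induction k with
    | zero => intro _; simp
    | succ k ih =>
      intro hk
      rw [Finset.sum_range_succ, ih (by omega), bits, if_pos (by omega)]
      by_cases h : k < r0
      · simp [h]; omega
      · simp [h]; omega
  rw [this k0 le_rfl]; omega

theorem bits_sum (r0 k0 m : ℕ) (c : ℕ → Bool) (hr : r0 ≤ k0) :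
    ∑ i ∈ Finset.range (k0 + 2 * m), (bits r0 k0 c i).toNat = r0 + m := by
  induction m with
  | zero => exact bits_sum0 r0 k0 c hr
  | succ m ih =>
    rw [show k0 + 2 * (m+1) = k0 + 2 * m + 1 + 1 by ring, Finset.sum_range_succ,
      Finset.sum_range_succ, ih]
    have e1 : bits r0 k0 c (k0 + 2 * m) = c m := by
      rw [bits, if_neg (by omega), if_pos (by omega)]
      congr 1; omega
    have e2 : bits r0 k0 c (k0 + 2 * m + 1) = !(c m) := by
      rw [bits, if_neg (by omega), if_neg (by omega)]
      congr 2; omega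
    rw [e1, e2]
    cases c m <;> simp <;> omega

theorem many_nice (n m : ℕ) (hn : 8750 < n) (hm : m = (n - 614) / 49) :
    ∃ T : Finset (List (Fin 3)), T.card = 2 ^ m ∧ ∀ w ∈ T, IsNice w ∧ w.length = n := by
  classical
  obtain ⟨R, hR⟩ : ∃ R, R = n - 14 - 49 * m := ⟨_, rfl⟩
  obtain ⟨k0, hk0⟩ : ∃ k0, k0 = R / 24 := ⟨_, rfl⟩
  obtain ⟨r0, hr0⟩ : ∃ r0, r0 = R % 24 := ⟨_, rfl⟩
  obtain ⟨N, hN⟩ : ∃ N, N = k0 + 2 * m := ⟨_, rfl⟩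
  have hr : r0 ≤ k0 := by omega
  obtain ⟨ω, hω⟩ := exists_sqf (N - 3)
  rw [show N - 3 + 3 = N by omega] at hω
  let ex : (Fin m → Bool) → ℕ → Bool := fun f i => if h : i < m then f ⟨i, h⟩ else false
  let W : (Fin m → Bool) → List (Fin 3) := fun f =>
    ac (ω 0) ++ mid ω (bits r0 k0 (ex f)) N ++ (ac (ω (N-1))).reverse
  have hinj : Function.Injective W := by
    intro f g hfg
    have h1 : mid ω (bits r0 k0 (ex f)) N = mid ω (bits r0 k0 (ex g)) N :=
      List.append_cancel_left (List.append_cancel_right hfg)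
    have h2 := mid_inj ω _ _ N h1
    funext ⟨i, hi⟩
    have h3 := h2 (k0 + 2 * i) (by omega)
    rw [bits, bits, if_neg (by omega), if_pos (by omega), if_neg (by omega), if_pos (by omega),
      show (k0 + 2 * i - k0) / 2 = i by omega] at h3
    simpa [ex, hi] using h3
  refine ⟨Finset.univ.image W, ?_, ?_⟩
  · rw [Finset.card_image_of_injective _ hinj]
    simp
  · intro w hw
    obtain ⟨f, _, rfl⟩ := Finset.mem_image.1 hw
    refine ⟨mid_nice ω _ N (by omega) hω, ?_⟩
    have hs := bits_sum r0 k0 m (ex f) hr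
    rw [← hN] at hs
    simp only [W, List.length_append, List.length_reverse, ac_len, mid_len, hs]
    omega

/-! ### The conflict graph -/

theorem lword_cases (i : ℕ) : lword i = [] ∨ Nice' (lword i) := by
  classical
  unfold lword
  split_ifs with h
  · right
    rw [← isNice_iff]
    exact (Set.IsWF.min_mem (Set.Finite.isWF
        ((List.finite_length_eq (Fin 3) i).subset (fun _ hw => hw.2))) h).1
  · left; rfl

noncomputable def conf (u : List (Fin 3)) (x : (ℕ × ℕ) × (Bool × Bool)) : List (Fin 3) :=
  if x.2.1 then ((lword x.1.1).reverse.take x.1.2 ++ (mirrorIf x.2.2 u).drop x.1.2).reverse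
  else (lword x.1.1).take x.1.2 ++ (mirrorIf x.2.2 u).drop x.1.2

noncomputable def outF (n : ℕ) (u : List (Fin 3)) : Finset (List (Fin 3)) :=
  insert u.reverse (((Finset.Icc (2*n+100) (7*n) ×ˢ Finset.Icc 1 n) ×ˢ
    (Finset.univ : Finset (Bool × Bool))).image (conf u))

theorem outF_card (n : ℕ) (hn : 0 < n) (u : List (Fin 3)) : (outF n u).card ≤ 20 * n ^ 2 + 1 := by
  refine (Finset.card_insert_le _ _).trans (Nat.succ_le_succ (Finset.card_image_le.trans ?_))
  rw [Finset.card_product, Finset.card_product, Nat.card_Icc, Nat.card_Icc]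
  have : (Finset.univ : Finset (Bool × Bool)).card = 4 := rfl
  rw [this]
  have h : 7 * n + 1 - (2 * n + 100) ≤ 5 * n := by omega
  calc (7 * n + 1 - (2 * n + 100)) * (n + 1 - 1) * 4 ≤ 5 * n * n * 4 := by gcongr; omega
    _ = 20 * n ^ 2 := by ring

theorem conf_mem (n i t : ℕ) (a b : Bool) (u : List (Fin 3)) (h1 : 2*n+100 ≤ i) (h2 : i ≤ 7*n)
    (h3 : 1 ≤ t) (h4 : t ≤ n) : conf u ((i, t), (a, b)) ∈ outF n u := by
  refine Finset.mem_insert_of_mem (Finset.mem_image_of_mem _ ?_)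
  simp only [Finset.mem_product, Finset.mem_Icc, Finset.mem_univ, and_true]
  exact ⟨⟨h1, h2⟩, h3, h4⟩

theorem pow_bound (n m : ℕ) (h : n / 69 + 1 ≤ m) : (1.01 : ℝ) ^ n ≤ 2 ^ m := by
  have h1 : (1.01 : ℝ) ^ 69 ≤ 2 := by norm_num
  calc (1.01 : ℝ) ^ n ≤ 1.01 ^ (69 * (n / 69 + 1)) :=
        pow_le_pow_right₀ (by norm_num) (by omega)
    _ = (1.01 ^ 69) ^ (n / 69 + 1) := by rw [pow_mul]
    _ ≤ 2 ^ (n / 69 + 1) := pow_le_pow_left₀ (by positivity) h1 _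
    _ ≤ 2 ^ m := pow_le_pow_right₀ (by norm_num) h

/-- For every `n > 8750` there is an `n`-good set of size at least
`1.01 ^ n / (16 (60 n² + 1))`. -/
theorem exists_large_good_set (n : ℕ) (hn : 8750 < n) :
    ∃ S : Set (List (Fin 3)), GoodSet n S ∧
      (1.01 : ℝ) ^ n / (16 * (60 * (n : ℝ) ^ 2 + 1)) ≤ S.ncard := by
  classical
  obtain ⟨m, hm⟩ : ∃ m, m = (n - 614) / 49 := ⟨_, rfl⟩
  obtain ⟨T, hT, hTn⟩ := many_nice n m hn hm
  obtain ⟨S, hST, hS, hc⟩ := exists_indep (outF n) _ (outF_card n (by omega)) T.card T le_rfl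
  have hrev : ∀ u ∈ S, ∀ v ∈ S, u ≠ v → v ≠ u.reverse := fun u hu v hv huv h =>
    hS u hu v hv huv (by rw [h]; exact Finset.mem_insert_self _ _)
  refine ⟨(S : Set (List (Fin 3))), ⟨?_, ?_, ?_⟩, ?_⟩
  · intro w hw
    exact hTn w (hST hw)
  · intro w hw hne hw'
    exact hrev w hw _ hw' hne rfl
  · intro i hi1 hi2 u hu v hv huv
    obtain ⟨nu, lu⟩ := hTn u (hST hu)
    obtain ⟨nv, lv⟩ := hTn v (hST hv)
    rw [isNice_iff] at nu nv
    have hl := lword_cases i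
    have hl' : (lword i).reverse = [] ∨ Nice' (lword i).reverse := by
      rcases hl with h | h
      · left; rw [h]; rfl
      · right; exact h.reverse
    have key : ∀ a b t, 1 ≤ t → t ≤ n → v ≠ conf u ((i, t), (a, b)) := fun a b t h1 h2 h =>
      hS u hu v hv huv (by rw [h]; exact conf_mem n i t a b u hi1 hi2 h1 h2)
    have hr := hrev u hu v hv huv
    refine ⟨?_, ?_, ?_, ?_⟩
    · exact glue n u v _ nu nv lu lv (by omega) huv hl
        (fun t h1 h2 h => key false false t h1 h2 h)
    · exact glue n u.reverse v _ nu.reverse nv (by simpa using lu) lv (by omega) hr.symm hl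
        (fun t h1 h2 h => key false true t h1 h2 h)
    · refine glue n u v.reverse _ nu nv.reverse lu (by simpa using lv) (by omega) ?_ hl'
        (fun t h1 h2 h => key true false t h1 h2 ?_)
      · intro h; exact hr (by rw [h, List.reverse_reverse])
      · have := congrArg List.reverse h
        rw [List.reverse_reverse] at this
        exact this
    · refine glue n u.reverse v.reverse _ nu.reverse nv.reverse (by simpa using lu)
        (by simpa using lv) (by omega) ?_ hl' (fun t h1 h2 h => key true true t h1 h2 ?_)
      · intro h; exact huv (List.reverse_injective h)
      · have := congrArg List.reverse h
        rw [List.reverse_reverse] at this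
        exact this
  · rw [Set.ncard_coe_finset, div_le_iff₀ (by positivity)]
    rw [hT] at hc
    have hc' : (2 : ℝ) ^ m ≤ S.card * (2 * (20 * (n:ℝ) ^ 2 + 1) + 1) := by exact_mod_cast hc
    have hn1 : (1 : ℝ) ≤ (n:ℝ) ^ 2 := by
      have : (1 : ℝ) ≤ n := by exact_mod_cast (by omega : 1 ≤ n)
      nlinarith
    calc (1.01 : ℝ) ^ n ≤ 2 ^ m := pow_bound n m (by omega)
      _ ≤ _ := hc'
      _ ≤ _ := by
        apply mul_le_mul_of_nonneg_left _ (Nat.cast_nonneg _)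
        linarith
end
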